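/- Let F be a field of characteristic zero, 0 ≤ μ < 1 a constant, δ = (1−μ)/2, and let NW_{n,μ} be the Nisan–Wigderson polynomial in N variables. Choose r = ⌊ε₁·√n⌋ and s = ⌊ε₂·√n⌋ for sufficiently small positive constants ε₁, ε₂ with ε₁·ε₂ ≤ 0.001, let m = ⌊(N/2)·(1 − r·(ln n)/n)⌋, let p = N^{−(μ+δ)}, and let M be the set of all multilinear monomials of degree r. Then there exist constants c₁, c₂ > 0 such that for all sufficiently large n, with probability at least 1 − n^{−c₂} over V ← D_p, Φ_{M,m}(NW_{n,μ}|_V) ≥ n^{−c₁} · min( (p^r / 4^r) · binom(N, r) · binom(N, m), binom(N, m + n − r) ). -/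

import Mathlib

open MvPolynomial

/-- Projection of a polynomial onto the multilinear monomials in its support. -/
noncomputable def mlProj {F : Type*} [Field F] {σ : Type*} [Fintype σ] [DecidableEq σ]
    (P : MvPolynomial σ F) : MvPolynomial σ F :=
  ∑ m ∈ P.support.filter (fun m => ∀ v, m v ≤ 1), monomial m (coeff m P)

/-- Partial derivative of `P` with respect to the monomial `γ` (iterating `∂/∂X_v`
according to the exponents of `γ`). -/
noncomputable def monDeriv {F : Type*} [Field F] {σ : Type*} [Fintype σ] [DecidableEq σ]
    (γ : σ →₀ ℕ) (P : MvPolynomial σ F) : MvPolynomial σ F :=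
  (Finset.univ : Finset σ).toList.foldr (fun v Q => (fun R => pderiv v R)^[γ v] Q) P

/-- The dimension of the space of `(M, m)`-projected shifted partial derivatives of `P`. -/
noncomputable def Phi {σ : Type*} [Fintype σ] [DecidableEq σ] (F : Type*) [Field F]
    (M : Set (σ →₀ ℕ)) (m : ℕ) (P : MvPolynomial σ F) : ℕ :=
  Module.finrank F (Submodule.span F
    {q : MvPolynomial σ F | ∃ γ ∈ M, ∃ S : Finset σ, S.card = m ∧
      q = mlProj ((∏ i ∈ S, X i) * monDeriv γ P)})

/-- Restriction of `P`: substitute `0` for every variable outside `V`. -/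
noncomputable def restrictPoly {F : Type*} [Field F] {σ : Type*} [DecidableEq σ]
    (V : Finset σ) (P : MvPolynomial σ F) : MvPolynomial σ F :=
  aeval (fun v => if v ∈ V then X v else 0) P

/-- Probability, under the product distribution where each variable is kept alive
independently with probability `p`, of the event `E` of subsets of the variables. -/
noncomputable def restrictProb (σ : Type*) [Fintype σ] (p : ℝ) (E : Finset σ → Prop) : ℝ := by
  classical
  exact ∑ V : Finset σ, if E V then p ^ V.card * (1 - p) ^ (Fintype.card σ - V.card) else 0

/-- The parameter `γ` in the definition of the Nisan–Wigderson polynomial,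
with `δ = (1-μ)/2`. -/
noncomputable def nwGamma (μ : ℝ) : ℝ :=
  (2 * (μ + (1 - μ) / 2) + 1) / (1 - (μ + (1 - μ) / 2))

/-- The degree parameter `D` of the Nisan–Wigderson polynomial `NW_{n,μ}`:
`D = ((γ+ρ)/(2(1+γ)))·n` with `ρ = (μ+δ)·log N/log n`. -/
noncomputable def nwDreal (μ : ℝ) (n N : ℕ) : ℝ :=
  (nwGamma μ + (μ + (1 - μ) / 2) * Real.log N / Real.log n) / (2 * (1 + nwGamma μ)) * n

/-- The Nisan–Wigderson polynomial `NW_{n,μ}` on the variables `X_{i,j}`,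
`i ∈ [n]`, `j ∈ F_ψ`. -/
noncomputable def NWpoly (F : Type*) [Field F] (μ : ℝ) (n ψ : ℕ) [NeZero ψ] :
    MvPolynomial (Fin n × ZMod ψ) F :=
  ∑ c : Fin ⌊nwDreal μ n (n * ψ)⌋₊ → ZMod ψ,
    ∏ i : Fin n, X (i, ∑ k : Fin ⌊nwDreal μ n (n * ψ)⌋₊, c k * ((i : ℕ) : ZMod ψ) ^ (k : ℕ))

/-!
The monomials of a Nisan–Wigderson polynomial are the graphs of the words of a Reed–Solomon code,
which is maximum distance separable: any `k ≤ d` prescribed coordinates are shared by exactly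
`ψ ^ (d - k)` of its `ψ ^ d` words. The measure `Φ` of a sum of such monomials is at least the rank
of the matrix `M` of natural numbers whose rows are indexed by the pairs of a derivative and a
shift, and whose columns are indexed by the multilinear monomials of degree `m + n - r`.
Cauchy–Schwarz for the eigenvalues of `Mᵀ M` bounds this rank from below by
`tr (Mᵀ M) ^ 2 / tr ((Mᵀ M) ^ 2)`.

The first trace is at least a fixed multiple of the number of surviving monomials, which by
Chebyshev's inequality is rarely less than half its mean `ψ ^ d * p ^ n`. The second trace is a sum
over quadruples of codewords, where `f, f', g, g'` contribute only if `f - f' = g - g'`. Its mean is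
therefore a sum over the two codewords `f - f'` and `f - g`, and their contribution depends only on
their numbers of zeros; maximum distance separability makes the terms with `f = f'` and few zeros of
`f - g` dominate up to a constant. The terms with `f = g` carry powers of `(1 - q) / q`, where
`q = (m + n - r) / N`: the choice of `m` brings `q` so close to `1 / 2` that these stay below
`2 * n ^ (2 * r)`, and `n ^ 2 ≤ ψ * p` absorbs this. Markov's inequality with an allowance of a
factor of order `n` for the second trace finishes the proof.
-/

section Rank

open Matrix

variable {ι κ : Type*}

theorem linearIndependent_natCast_iff [Finite κ] (K : Type*) [Field K] [CharZero K]
    (v : ι → κ → ℕ) :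
    LinearIndependent K (fun i j => (v i j : K)) ↔
      LinearIndependent ℤ (fun i j => (v i j : ℤ)) := by
  have hcast : (fun i j => (v i j : K)) = fun i => algebraMap ℤ K ∘ fun j => (v i j : ℤ) := by
    ext i j
    simp
  rw [hcast, linearIndependent_algebraMap_comp_iff]

variable [Fintype κ]

theorem rank_map_natCast_le [Finite ι] (K L : Type*) [Field K] [CharZero K] [Field L] [CharZero L]
    (M : Matrix ι κ ℕ) : (M.map (Nat.cast : ℕ → K)).rank ≤ (M.map (Nat.cast : ℕ → L)).rank := by
  obtain ⟨ι', a, _, hspan, hK⟩ := exists_linearIndependent' K (M.map (Nat.cast : ℕ → K)).row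
  have : Finite ι' := hK.finite
  have := Fintype.ofFinite ι'
  have hL : LinearIndependent L ((M.map (Nat.cast : ℕ → L)).row ∘ a) :=
    (linearIndependent_natCast_iff L (M ∘ a)).2 ((linearIndependent_natCast_iff K (M ∘ a)).1 hK)
  rw [rank_eq_finrank_span_row, rank_eq_finrank_span_row, ← hspan, finrank_span_eq_card hK,
    ← finrank_span_eq_card hL]
  exact Submodule.finrank_mono (Submodule.span_mono (Set.range_comp_subset_range _ _))

theorem sum_eigenvalues_sq [DecidableEq κ] {B : Matrix κ κ ℝ} (hB : B.IsHermitian) :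
    ∑ j, hB.eigenvalues j ^ 2 = ∑ j, ∑ j', B j j' ^ 2 := by
  have htrace : (B * B).trace = ∑ j, ∑ j', B j j' ^ 2 := by
    simp only [Matrix.trace, Matrix.diag, Matrix.mul_apply]
    refine Finset.sum_congr rfl fun j _ => Finset.sum_congr rfl fun j' _ => ?_
    rw [sq, ← show B j' j = B j j' by simpa using hB.apply j j']
  rw [← htrace]
  conv_rhs => rw [hB.spectral_theorem]
  rw [← map_mul, Matrix.diagonal_mul_diagonal, Unitary.conjStarAlgAut_apply,
    Matrix.trace_mul_comm, ← mul_assoc]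
  simp [sq]

theorem trace_sq_le_rank_mul_sum_sq {B : Matrix κ κ ℝ} (hB : B.IsHermitian) :
    B.trace ^ 2 ≤ B.rank * ∑ j, ∑ j', B j j' ^ 2 := by
  classical
  have htrace : B.trace = ∑ j with hB.eigenvalues j ≠ 0, hB.eigenvalues j := by
    rw [Finset.sum_filter_ne_zero, hB.trace_eq_sum_eigenvalues]
    simp
  have hrank : B.rank = ({j | hB.eigenvalues j ≠ 0} : Finset κ).card := by
    rw [hB.rank_eq_card_non_zero_eigs, Fintype.card_subtype]
  rw [htrace, hrank, ← sum_eigenvalues_sq hB]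
  refine sq_sum_le_card_mul_sum_sq.trans (mul_le_mul_of_nonneg_left ?_ (Nat.cast_nonneg _))
  exact Finset.sum_le_sum_of_subset_of_nonneg (Finset.subset_univ _) fun _ _ _ => sq_nonneg _

theorem sq_sum_sq_le_rank_mul_sum_gram_sq [Fintype ι] (M : Matrix ι κ ℝ) :
    (∑ i, ∑ j, M i j ^ 2) ^ 2 ≤ M.rank * ∑ j, ∑ j', (Mᵀ * M) j j' ^ 2 := by
  have hgram : (Mᵀ * M).IsHermitian := by
    simpa [Matrix.conjTranspose_eq_transpose_of_trivial] using
      Matrix.isHermitian_conjTranspose_mul_self M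
  have htrace : (Mᵀ * M).trace = ∑ i, ∑ j, M i j ^ 2 := by
    rw [Finset.sum_comm]
    simp [Matrix.trace, Matrix.mul_apply, sq]
  rw [← htrace, ← Matrix.rank_transpose_mul_self M]
  exact trace_sq_le_rank_mul_sum_sq hgram

end Rank

section Multilinear

open Finset

variable {σ F : Type*} [Field F]

/-- The exponent vector of the multilinear monomial `∏ v ∈ A, X v`. -/
noncomputable def indExp (A : Finset σ) : σ →₀ ℕ :=
  ∑ v ∈ A, Finsupp.single v 1

theorem prod_X_eq_monomial_indExp (A : Finset σ) :
    (∏ v ∈ A, X v : MvPolynomial σ F) = monomial (indExp A) 1 := by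
  rw [indExp, monomial_sum_one]
  rfl

theorem indExp_apply [DecidableEq σ] (A : Finset σ) (v : σ) :
    indExp A v = if v ∈ A then 1 else 0 := by
  simp [indExp, Finsupp.finsetSum_apply, Finsupp.single_apply]

theorem indExp_le_one (A : Finset σ) (v : σ) : indExp A v ≤ 1 := by
  classical
  rw [indExp_apply]
  split_ifs <;> simp

theorem sum_indExp [Fintype σ] (A : Finset σ) : ∑ v, indExp A v = #A := by
  classical
  simp [indExp_apply]

theorem setOf_multilinear_eq_image_indExp [Fintype σ] (r : ℕ) :
    {γ : σ →₀ ℕ | (∀ v, γ v ≤ 1) ∧ ∑ v, γ v = r} = indExp '' {G : Finset σ | #G = r} := by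
  classical
  refine Set.Subset.antisymm (fun γ ⟨hle, hsum⟩ => ?_) ?_
  · have hγ : indExp (univ.filter fun v => γ v = 1) = γ := by
      ext v
      have := hle v
      simp only [indExp_apply, mem_filter_univ]
      split_ifs <;> omega
    exact ⟨_, by rw [Set.mem_ofPred_eq, ← sum_indExp, hγ, hsum], hγ⟩
  · rintro _ ⟨G, hG, rfl⟩
    exact ⟨indExp_le_one G, (sum_indExp G).trans hG⟩

theorem iterate_pderiv_monomial (v : σ) (k : ℕ) (s : σ →₀ ℕ) (a : F) :
    (fun R => pderiv v R)^[k] (monomial s a) =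
      monomial (s - Finsupp.single v k) (a * (s v).descFactorial k) := by
  induction k with
  | zero => simp
  | succ k ih =>
    rw [Function.iterate_succ_apply', ih, pderiv_monomial, Nat.descFactorial_succ]
    simp only [tsub_tsub, ← Finsupp.single_add, Finsupp.tsub_apply, Finsupp.single_eq_same]
    push_cast
    ring_nf

variable [DecidableEq σ]

theorem indExp_sdiff (A B : Finset σ) : indExp (A \ B) = indExp A - indExp B := by
  ext v
  by_cases hA : v ∈ A <;> by_cases hB : v ∈ B <;> simp [indExp_apply, hA, hB]

theorem indExp_add_eq_iff {A B T : Finset σ} :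
    indExp A + indExp B = indExp T ↔ Disjoint A B ∧ T = A ∪ B := by
  simp only [Finsupp.ext_iff, Finsupp.add_apply, indExp_apply, disjoint_left, Finset.ext_iff,
    mem_union, ← forall_and]
  refine forall_congr' fun v => ?_
  by_cases hA : v ∈ A <;> by_cases hB : v ∈ B <;> by_cases hT : v ∈ T <;> simp [hA, hB, hT]

theorem restrictPoly_prod_X (V A : Finset σ) :
    restrictPoly V (∏ v ∈ A, X v : MvPolynomial σ F) = if A ⊆ V then ∏ v ∈ A, X v else 0 := by
  simp only [restrictPoly, map_prod, aeval_X]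
  split_ifs with h
  · exact prod_congr rfl fun v hv => if_pos (h hv)
  · obtain ⟨v, hv, hv'⟩ := not_subset.mp h
    exact prod_eq_zero hv (if_neg hv')

theorem restrictPoly_sum_prod_X (V : Finset σ) (𝒜 : Finset (Finset σ)) :
    restrictPoly V (∑ A ∈ 𝒜, ∏ v ∈ A, (X v : MvPolynomial σ F)) =
      ∑ A ∈ 𝒜 with A ⊆ V, ∏ v ∈ A, X v := by
  rw [sum_filter]
  simp only [← restrictPoly_prod_X, restrictPoly, map_sum]

variable [Fintype σ]

theorem coeff_mlProj_indExp (P : MvPolynomial σ F) (T : Finset σ) :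
    coeff (indExp T) (mlProj P) = coeff (indExp T) P := by
  simp only [mlProj, coeff_sum, coeff_monomial, sum_ite_eq', mem_filter, mem_support_iff,
    indExp_le_one, implies_true, and_true, ite_eq_left_iff, not_not]
  exact Eq.symm

theorem monDeriv_monomial (γ s : σ →₀ ℕ) (a : F) :
    monDeriv γ (monomial s a) = monomial (s - γ) (a * ∏ v, ((s v).descFactorial (γ v) : F)) := by
  have hfold (l : List σ) (hl : l.Nodup) :
      l.foldr (fun v Q => (fun R => pderiv v R)^[γ v] Q) (monomial s a) =
        monomial (s - γ.filter (· ∈ l))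
          (a * (l.map fun v => ((s v).descFactorial (γ v) : F)).prod) := by
    induction l with
    | nil =>
      rw [show γ.filter (· ∈ []) = 0 by ext; simp]
      simp
    | cons v l ih =>
      obtain ⟨hv, hl⟩ := List.nodup_cons.1 hl
      have hγ : s - γ.filter (· ∈ l) - Finsupp.single v (γ v) = s - γ.filter (· ∈ v :: l) := by
        ext w
        by_cases hw : w = v
        · simp [hw, hv]
        · simp [hw, Finsupp.filter_apply]
      rw [List.foldr_cons, ih hl, iterate_pderiv_monomial, hγ, List.map_cons, List.prod_cons]
      simp only [Finsupp.tsub_apply, Finsupp.filter_apply, hv, if_false, tsub_zero]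
      ring_nf
  have hγ : γ.filter (· ∈ (univ : Finset σ).toList) = γ := by
    ext
    simp
  rw [monDeriv, hfold _ (nodup_toList _), prod_map_toList, hγ]

theorem monDeriv_indExp_prod_X (G A : Finset σ) :
    monDeriv (indExp G) (∏ v ∈ A, X v : MvPolynomial σ F) =
      if G ⊆ A then ∏ v ∈ A \ G, X v else 0 := by
  have hcoeff (v : σ) : ((indExp A v).descFactorial (indExp G v) : F) =
      if v ∈ G → v ∈ A then 1 else 0 := by
    by_cases hG : v ∈ G <;> by_cases hA : v ∈ A <;> simp [indExp_apply, hG, hA]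
  simp only [prod_X_eq_monomial_indExp, monDeriv_monomial, hcoeff, indExp_sdiff, prod_ite_zero,
    mem_univ, true_imp_iff, prod_const_one, one_mul]
  split_ifs with h h' h'
  · rfl
  · exact absurd h h'
  · exact absurd h' h
  · rw [map_zero]

theorem monDeriv_sum {ι : Type*} (s : Finset ι) (γ : σ →₀ ℕ) (f : ι → MvPolynomial σ F) :
    monDeriv γ (∑ i ∈ s, f i) = ∑ i ∈ s, monDeriv γ (f i) := by
  have hiter (v : σ) (k : ℕ) (g : ι → MvPolynomial σ F) :
      (fun R => pderiv v R)^[k] (∑ i ∈ s, g i) = ∑ i ∈ s, (fun R => pderiv v R)^[k] (g i) := by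
    induction k with
    | zero => rfl
    | succ k ih => simp only [Function.iterate_succ_apply', ih, map_sum]
  unfold monDeriv
  induction (univ : Finset σ).toList with
  | nil => rfl
  | cons v l ih => simp only [List.foldr_cons, ih, hiter]

end Multilinear

section ShiftMatrix

open Finset Matrix

variable {σ : Type*} [DecidableEq σ] (r m : ℕ)

/-- Coefficient matrix of the shifts by multilinear monomials of degree `m` of the derivatives of
`∏ v ∈ A, X v` along multilinear monomials of degree `r`. Rows are indexed by the pairs `(G, S)` of
supports of the differentiating and of the shifting monomial, columns by the support of a
multilinear monomial; rows with the wrong degrees are zero. -/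
def shiftMatrix (A : Finset σ) : Matrix (Finset σ × Finset σ) (Finset σ) ℕ :=
  of fun R T => if (#R.1 = r ∧ R.1 ⊆ A) ∧ (#R.2 = m ∧ Disjoint R.2 (A \ R.1)) ∧
    T = R.2 ∪ A \ R.1 then 1 else 0

variable {r m}

theorem sum_shiftMatrix_eq_zero (𝒜 : Finset (Finset σ)) {R : Finset σ × Finset σ}
    (hR : ¬(#R.1 = r ∧ #R.2 = m)) : (∑ A ∈ 𝒜, shiftMatrix r m A) R = 0 := by
  ext T
  rw [Matrix.sum_apply]
  exact sum_eq_zero fun A _ => if_neg fun h => hR ⟨h.1.1, h.2.1.1⟩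

variable [Fintype σ]

theorem coeff_mlProj_shift_monDeriv {F : Type*} [Field F] (𝒜 : Finset (Finset σ))
    {G S : Finset σ} (hG : #G = r) (hS : #S = m) (T : Finset σ) :
    coeff (indExp T) (mlProj ((∏ v ∈ S, X v) *
      monDeriv (indExp G) (∑ A ∈ 𝒜, ∏ v ∈ A, (X v : MvPolynomial σ F)))) =
      (((∑ A ∈ 𝒜, shiftMatrix r m A) (G, S) T : ℕ) : F) := by
  rw [coeff_mlProj_indExp, monDeriv_sum, mul_sum, coeff_sum, Matrix.sum_apply, Nat.cast_sum]
  refine sum_congr rfl fun A _ => ?_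
  simp only [monDeriv_indExp_prod_X, shiftMatrix, of_apply, hG, hS, true_and]
  split_ifs with hGA hT hT
  · rw [prod_X_eq_monomial_indExp, prod_X_eq_monomial_indExp, monomial_mul, coeff_monomial,
      if_pos (indExp_add_eq_iff.2 hT.2), mul_one, Nat.cast_one]
  · rw [prod_X_eq_monomial_indExp, prod_X_eq_monomial_indExp, monomial_mul, coeff_monomial,
      if_neg fun h => hT ⟨hGA, indExp_add_eq_iff.1 h⟩, Nat.cast_zero]
  · exact absurd hT.1 hGA
  · rw [mul_zero, coeff_zero, Nat.cast_zero]

theorem rank_sum_shiftMatrix_le_Phi (F : Type*) [Field F] [CharZero F] (K : Type*) [Field K]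
    [CharZero K] (r m : ℕ) (𝒜 : Finset (Finset σ)) :
    ((∑ A ∈ 𝒜, shiftMatrix r m A).map (Nat.cast : ℕ → K)).rank ≤
      Phi F {γ : σ →₀ ℕ | (∀ v, γ v ≤ 1) ∧ ∑ v, γ v = r} m (∑ A ∈ 𝒜, ∏ v ∈ A, X v) := by
  refine (rank_map_natCast_le K F _).trans ?_
  rw [rank_eq_finrank_span_row, Phi, setOf_multilinear_eq_image_indExp]
  set P : MvPolynomial σ F := ∑ A ∈ 𝒜, ∏ v ∈ A, X v
  set gens : Set (MvPolynomial σ F) :=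
    {q | ∃ γ ∈ indExp '' {G : Finset σ | #G = r}, ∃ S : Finset σ, #S = m ∧
      q = mlProj ((∏ v ∈ S, X v) * monDeriv γ P)}
  have hfin : gens.Finite := by
    refine (Set.finite_range fun R : Finset σ × Finset σ =>
      mlProj ((∏ v ∈ R.2, X v) * monDeriv (indExp R.1) P)).subset ?_
    rintro _ ⟨_, ⟨G, -, rfl⟩, S, -, rfl⟩
    exact ⟨(G, S), rfl⟩
  have : Module.Finite F (Submodule.span F gens) := FiniteDimensional.span_of_finite F hfin
  let toCoeffs : MvPolynomial σ F →ₗ[F] (Finset σ → F) := LinearMap.pi fun T => lcoeff F (indExp T)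
  suffices hrows : Submodule.span F (Set.range
      ((∑ A ∈ 𝒜, shiftMatrix r m A).map (Nat.cast : ℕ → F)).row) ≤
      (Submodule.span F gens).map toCoeffs from
    (Submodule.finrank_mono hrows).trans (Submodule.finrank_map_le _ _)
  rw [Submodule.span_le]
  rintro _ ⟨R, rfl⟩
  by_cases hR : #R.1 = r ∧ #R.2 = m
  · refine ⟨_, Submodule.subset_span ⟨_, ⟨R.1, hR.1, rfl⟩, R.2, hR.2, rfl⟩, ?_⟩
    ext T
    exact coeff_mlProj_shift_monDeriv 𝒜 hR.1 hR.2 T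
  · have hzero : ((∑ A ∈ 𝒜, shiftMatrix r m A).map (Nat.cast : ℕ → F)).row R = 0 := by
      ext T
      simp [Matrix.row, sum_shiftMatrix_eq_zero 𝒜 hR]
    rw [hzero]
    exact Submodule.zero_mem _

theorem sum_sum_shiftMatrix (r m : ℕ) (A : Finset σ) :
    ∑ R, ∑ T, shiftMatrix r m A R T =
      (#A).choose r * (Fintype.card σ - (#A - r)).choose m := by
  have hrow (R : Finset σ × Finset σ) : ∑ T, shiftMatrix r m A R T =
      if R.1 ∈ A.powersetCard r then
        if R.2 ∈ ((A \ R.1)ᶜ).powersetCard m then 1 else 0 else 0 := by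
    simp only [shiftMatrix, of_apply, ite_and, sum_ite_irrel, sum_ite_eq', mem_univ, if_true,
      sum_const_zero, mem_powersetCard, subset_compl_iff_disjoint_right]
    split_ifs <;> tauto
  have hcompl (G : Finset σ) (hG : G ∈ A.powersetCard r) :
      #((A \ G)ᶜ) = Fintype.card σ - (#A - r) := by
    rw [mem_powersetCard] at hG
    rw [card_compl, card_sdiff_of_subset hG.1, hG.2]
  calc ∑ R, ∑ T, shiftMatrix r m A R T
      = ∑ G ∈ A.powersetCard r, ∑ S, if S ∈ ((A \ G)ᶜ).powersetCard m then 1 else 0 := by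
        simp only [hrow, Fintype.sum_prod_type, sum_ite_irrel, sum_const_zero, sum_ite_mem,
          univ_inter]
    _ = ∑ _ ∈ A.powersetCard r, (Fintype.card σ - (#A - r)).choose m :=
        sum_congr rfl fun G hG => by simp [-mem_powersetCard, hcompl G hG]
    _ = (#A).choose r * (Fintype.card σ - (#A - r)).choose m := by simp

end ShiftMatrix

section Quadruples

open Finset Matrix

variable {σ : Type*} [Fintype σ] [DecidableEq σ] {r m : ℕ} {A A' B B' T T' : Finset σ}

theorem sdiff_eq_of_gram_shiftMatrix_ne_zero
    (h : ((shiftMatrix r m A)ᵀ * shiftMatrix r m A') T T' ≠ 0) :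
    T \ T' = A \ A' ∧ T' \ T = A' \ A ∧ #T = m + (#A - r) := by
  obtain ⟨R, -, hR⟩ := exists_ne_zero_of_sum_ne_zero h
  simp only [transpose_apply, shiftMatrix, of_apply, ite_zero_mul_ite_zero, mul_one, ne_eq,
    ite_eq_right_iff, one_ne_zero, imp_false, not_not] at hR
  obtain ⟨⟨⟨hG, hGA⟩, ⟨hS, hd⟩, rfl⟩, ⟨-, hGA'⟩, ⟨-, hd'⟩, rfl⟩ := hR
  refine ⟨?_, ?_, by rw [card_union_of_disjoint hd, hS, card_sdiff_of_subset hGA, hG]⟩ <;>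
  · ext v
    have := @hGA v
    have := @hGA' v
    have := fun h : v ∈ R.2 => disjoint_left.mp hd h
    have := fun h : v ∈ R.2 => disjoint_left.mp hd' h
    simp only [mem_sdiff, mem_union] at *
    tauto

theorem gram_shiftMatrix_le (r m : ℕ) (A A' T T' : Finset σ) :
    ((shiftMatrix r m A)ᵀ * shiftMatrix r m A') T T' ≤
      #{G ∈ (A ∩ A').powersetCard r | A \ G ⊆ T} := by
  simp only [mul_apply, transpose_apply, shiftMatrix, of_apply, ite_zero_mul_ite_zero, mul_one,
    ← card_filter]
  refine card_le_card_of_injOn Prod.fst ?_ ?_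
  · rintro R hR
    simp only [coe_filter, mem_univ, true_and, Set.mem_ofPred_eq] at hR
    obtain ⟨⟨⟨hG, hGA⟩, -, hT⟩, ⟨-, hGA'⟩, -⟩ := hR
    simp only [coe_filter, mem_powersetCard, Set.mem_ofPred_eq]
    exact ⟨⟨subset_inter hGA hGA', hG⟩, hT ▸ subset_union_right⟩
  · rintro ⟨G, S⟩ hR ⟨_, S'⟩ hR' rfl
    simp only [coe_filter, mem_univ, true_and, Set.mem_ofPred_eq] at hR hR'
    obtain ⟨⟨-, ⟨-, hd⟩, hT⟩, -⟩ := hR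
    obtain ⟨⟨-, ⟨-, hd'⟩, hT'⟩, -⟩ := hR'
    have hS : S = S' := by
      rw [← sdiff_eq_self_of_disjoint hd, ← sdiff_eq_self_of_disjoint hd', ← union_sdiff_right,
        ← hT, hT', union_sdiff_right]
    rw [hS]

/-- The contribution of the monomials supported on `A, A', B, B'` to the squared Frobenius norm of
the Gram matrix `(∑ A, shiftMatrix r m A)ᵀ * ∑ A, shiftMatrix r m A`. -/
def quadCount (r m : ℕ) (A A' B B' : Finset σ) : ℕ :=
  ∑ T, ∑ T', ((shiftMatrix r m A)ᵀ * shiftMatrix r m A') T T' *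
    ((shiftMatrix r m B)ᵀ * shiftMatrix r m B') T T'

theorem sum_gram_sq_eq_sum_quadCount (r m : ℕ) (𝒜 : Finset (Finset σ)) :
    ∑ T, ∑ T', ((∑ A ∈ 𝒜, shiftMatrix r m A)ᵀ * ∑ A ∈ 𝒜, shiftMatrix r m A) T T' ^ 2 =
      ∑ x ∈ (𝒜 ×ˢ 𝒜) ×ˢ 𝒜 ×ˢ 𝒜, quadCount r m x.1.1 x.1.2 x.2.1 x.2.2 := by
  have hgram : (∑ A ∈ 𝒜, shiftMatrix r m A)ᵀ * ∑ A ∈ 𝒜, shiftMatrix r m A =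
      ∑ x ∈ 𝒜 ×ˢ 𝒜, (shiftMatrix r m x.1)ᵀ * shiftMatrix r m x.2 := by
    simp only [transpose_sum, Matrix.sum_mul, Matrix.mul_sum, sum_product]
    exact sum_comm
  have hsq (f : Finset σ × Finset σ → ℕ) :
      (∑ x ∈ 𝒜 ×ˢ 𝒜, f x) ^ 2 = ∑ x ∈ (𝒜 ×ˢ 𝒜) ×ˢ 𝒜 ×ˢ 𝒜, f x.1 * f x.2 := by
    rw [sq, sum_mul_sum, ← sum_product']
  simp only [hgram, Matrix.sum_apply, hsq, quadCount]
  exact (sum_congr rfl fun T _ => sum_comm).trans sum_comm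

theorem sdiff_eq_of_quadCount_ne_zero (h : quadCount r m A A' B B' ≠ 0) :
    A \ A' = B \ B' ∧ A' \ A = B' \ B := by
  obtain ⟨T, -, hT⟩ := exists_ne_zero_of_sum_ne_zero h
  obtain ⟨T', -, hT'⟩ := exists_ne_zero_of_sum_ne_zero hT
  obtain ⟨hA, hA', -⟩ := sdiff_eq_of_gram_shiftMatrix_ne_zero (left_ne_zero_of_mul hT')
  obtain ⟨hB, hB', -⟩ := sdiff_eq_of_gram_shiftMatrix_ne_zero (right_ne_zero_of_mul hT')
  exact ⟨hA.symm.trans hB, hA'.symm.trans hB'⟩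

theorem sum_gram_mul_gram_le (r m : ℕ) (A A' B B' T : Finset σ) :
    ∑ T', ((shiftMatrix r m A)ᵀ * shiftMatrix r m A') T T' *
      ((shiftMatrix r m B)ᵀ * shiftMatrix r m B') T T' ≤
    if #T = m + (#A - r) ∧ Disjoint T (A' \ A) then
      #{G ∈ (A ∩ A').powersetCard r | A \ G ⊆ T} * #{G ∈ (B ∩ B').powersetCard r | B \ G ⊆ T}
    else 0 := by
  rw [Fintype.sum_eq_single (T \ (A \ A') ∪ A' \ A)]
  · split_ifs with hT
    · exact Nat.mul_le_mul (gram_shiftMatrix_le ..) (gram_shiftMatrix_le ..)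
    · refine (mul_eq_zero_of_left (by_contra fun h => hT ?_) _).le
      obtain ⟨-, hA', hcard⟩ := sdiff_eq_of_gram_shiftMatrix_ne_zero h
      exact ⟨hcard, hA' ▸ disjoint_sdiff⟩
  · intro T' hT'
    refine mul_eq_zero_of_left (by_contra fun h => hT' ?_) _
    obtain ⟨hA, hA', -⟩ := sdiff_eq_of_gram_shiftMatrix_ne_zero h
    rw [← hA, ← hA', sdiff_sdiff_self_left, inter_comm, union_comm, sdiff_union_inter]

theorem quadCount_le (r m : ℕ) (A A' B B' : Finset σ) :
    quadCount r m A A' B B' ≤ ∑ G ∈ (A ∩ A').powersetCard r ×ˢ (B ∩ B').powersetCard r,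
      #{T | #T = m + (#A - r) ∧ A \ G.1 ∪ B \ G.2 ⊆ T ∧ Disjoint T (A' \ A)} := by
  set 𝒯 : Finset (Finset σ) := {T | #T = m + (#A - r) ∧ Disjoint T (A' \ A)}
  set P := (A ∩ A').powersetCard r ×ˢ (B ∩ B').powersetCard r
  let sub (G : Finset σ × Finset σ) (T : Finset σ) : Prop := A \ G.1 ∪ B \ G.2 ⊆ T
  calc quadCount r m A A' B B'
      ≤ ∑ T ∈ 𝒯, #{G ∈ (A ∩ A').powersetCard r | A \ G ⊆ T} *
          #{G ∈ (B ∩ B').powersetCard r | B \ G ⊆ T} := by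
        rw [sum_filter]
        exact sum_le_sum fun T _ => sum_gram_mul_gram_le ..
    _ = ∑ T ∈ 𝒯, #{G ∈ P | sub G T} := by
        refine sum_congr rfl fun T _ => ?_
        simp only [← card_product, ← filter_product, sub, union_subset_iff, P]
    _ = ∑ G ∈ P, #{T ∈ 𝒯 | sub G T} :=
        (sum_card_bipartiteAbove_eq_sum_card_bipartiteBelow sub).symm
    _ = _ := by simp only [𝒯, filter_filter, sub, and_assoc, and_comm]

end Quadruples

section RandomRestriction

open Finset

variable {σ : Type*} [Fintype σ] {p : ℝ}

/-- The expectation of `Y V` over a random set `V` of variables containing each variable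
independently with probability `p`, as a linear functional of the random variable `Y`. -/
noncomputable def restrictExp (p : ℝ) : (Finset σ → ℝ) →ₗ[ℝ] ℝ :=
  ∑ V, (p ^ #V * (1 - p) ^ (Fintype.card σ - #V)) • LinearMap.proj V

theorem restrictExp_apply (p : ℝ) (Y : Finset σ → ℝ) :
    restrictExp p Y = ∑ V, p ^ #V * (1 - p) ^ (Fintype.card σ - #V) * Y V := by
  simp [restrictExp]

theorem restrictExp_mono (h0 : 0 ≤ p) (h1 : p ≤ 1) : Monotone (restrictExp (σ := σ) p) := by
  intro Y Z h
  simp only [restrictExp_apply]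
  have := sub_nonneg.2 h1
  gcongr with V
  exact h V

open Classical in
theorem restrictProb_eq_restrictExp (p : ℝ) (E : Finset σ → Prop) :
    restrictProb σ p E = restrictExp p fun V => if E V then 1 else 0 := by
  simp [restrictProb, restrictExp_apply]

theorem restrictProb_mono (h0 : 0 ≤ p) (h1 : p ≤ 1) {E E' : Finset σ → Prop}
    (h : ∀ V, E V → E' V) : restrictProb σ p E ≤ restrictProb σ p E' := by
  classical
  rw [restrictProb_eq_restrictExp, restrictProb_eq_restrictExp]
  refine restrictExp_mono h0 h1 fun V => ?_
  split_ifs with hE hE' <;> first | exact absurd (h V hE) hE' | norm_num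

theorem restrictExp_subset [DecidableEq σ] (p : ℝ) (A : Finset σ) :
    restrictExp p (fun V => if A ⊆ V then 1 else 0) = p ^ #A := by
  have hA : ∀ v, (p + if v ∈ A then 0 else 1 - p) = if v ∈ A then p else 1 := by
    intro v
    split_ifs <;> ring
  calc restrictExp p (fun V => if A ⊆ V then 1 else 0)
      = ∑ V : Finset σ, (∏ _v ∈ V, p) * ∏ v ∈ univ \ V, if v ∈ A then 0 else 1 - p := by
        rw [restrictExp_apply]
        refine sum_congr rfl fun V _ => ?_
        rw [prod_const, mul_assoc]
        congr 1
        by_cases hV : A ⊆ V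
        · have hAV : ∀ v ∈ univ \ V, v ∉ A := fun v hv h => (mem_sdiff.1 hv).2 (hV h)
          rw [if_pos hV, prod_congr rfl fun v hv => if_neg (hAV v hv), prod_const, mul_one,
            card_univ_sdiff]
        · obtain ⟨v, hv, hvV⟩ := not_subset.1 hV
          have hzero : ∏ v ∈ univ \ V, (if v ∈ A then 0 else 1 - p) = 0 :=
            prod_eq_zero (mem_sdiff.2 ⟨mem_univ v, hvV⟩) (if_pos hv)
          rw [if_neg hV, mul_zero, hzero]
    _ = ∏ v, (p + if v ∈ A then 0 else 1 - p) := by rw [prod_add, powerset_univ]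
    _ = p ^ #A := by simp only [hA, prod_ite_mem, univ_inter, prod_const]

theorem restrictExp_one (p : ℝ) : restrictExp (σ := σ) p 1 = 1 := by
  classical
  have h := restrictExp_subset p (∅ : Finset σ)
  simp only [empty_subset, if_true, card_empty, pow_zero] at h
  exact h

theorem restrictExp_sum_filter_subset [DecidableEq σ] {κ : Type*} (p : ℝ) (s : Finset κ)
    (supp : κ → Finset σ) (f : κ → ℝ) :
    restrictExp p (fun V => ∑ k ∈ s with supp k ⊆ V, f k) = ∑ k ∈ s, p ^ #(supp k) * f k := by
  have hsum : (fun V => ∑ k ∈ s with supp k ⊆ V, f k) =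
      ∑ k ∈ s, f k • fun V => if supp k ⊆ V then (1 : ℝ) else 0 := by
    ext V
    simp [sum_filter]
  simp only [hsum, map_sum, map_smul, restrictExp_subset, smul_eq_mul, mul_comm]

theorem restrictExp_sub_const_sq (p : ℝ) (Y : Finset σ → ℝ) (Z : ℝ) :
    restrictExp p (fun V => (Y V - Z) ^ 2) =
      restrictExp p (fun V => Y V ^ 2) - 2 * Z * restrictExp p Y + Z ^ 2 := by
  have hsq : (fun V => (Y V - Z) ^ 2) = (fun V => Y V ^ 2) - (2 * Z) • Y + Z ^ 2 • 1 := by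
    ext V
    simp only [Pi.add_apply, Pi.sub_apply, Pi.smul_apply, Pi.one_apply, smul_eq_mul]
    ring
  rw [hsq, map_add, map_sub, map_smul, map_smul, restrictExp_one, smul_eq_mul, smul_eq_mul,
    mul_one]

theorem le_restrictProb_of_moments (h0 : 0 ≤ p) (h1 : p ≤ 1) {E : Finset σ → Prop}
    {S G : Finset σ → ℝ} {Z D w η : ℝ} (hZ : 0 < Z) (hD : 0 < D) (hw : 0 < w) (hG0 : 0 ≤ G)
    (hS : restrictExp p (fun V => (S V - Z) ^ 2) ≤ η * Z ^ 2) (hG : restrictExp p G ≤ D)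
    (hE : ∀ V, Z / 2 ≤ S V → G V ≤ w * D → E V) :
    1 - (4 * η + 1 / w) ≤ restrictProb σ p E := by
  classical
  have hmarkov : (1 : Finset σ → ℝ) ≤ (fun V => if E V then 1 else 0) +
      ((4 / Z ^ 2) • (fun V => (S V - Z) ^ 2) + (1 / (w * D)) • G) := by
    intro V
    have hGV : 0 ≤ 1 / (w * D) * G V := mul_nonneg (by positivity) (hG0 V)
    have hSV : 0 ≤ 4 / Z ^ 2 * (S V - Z) ^ 2 := by positivity
    simp only [Pi.one_apply, Pi.add_apply, Pi.smul_apply, smul_eq_mul]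
    split_ifs with hV
    · linarith
    rcases lt_or_ge (S V) (Z / 2) with hlt | hge
    · have : 1 ≤ 4 / Z ^ 2 * (S V - Z) ^ 2 := by
        rw [div_mul_eq_mul_div, one_le_div (by positivity)]
        nlinarith
      linarith
    · have : 1 ≤ 1 / (w * D) * G V := by
        rw [one_div_mul_eq_div, one_le_div (by positivity)]
        exact (not_le.1 fun h => hV (hE V hge h)).le
      linarith
  have hexp := restrictExp_mono h0 h1 hmarkov
  rw [map_add, map_add, map_smul, map_smul, restrictExp_one, ← restrictProb_eq_restrictExp,
    smul_eq_mul, smul_eq_mul] at hexp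
  have hS' : 4 / Z ^ 2 * restrictExp p (fun V => (S V - Z) ^ 2) ≤ 4 * η :=
    calc _ ≤ 4 / Z ^ 2 * (η * Z ^ 2) := by gcongr
      _ = 4 * η := by field_simp
  have hG' : 1 / (w * D) * restrictExp p G ≤ 1 / w :=
    calc _ ≤ 1 / (w * D) * D := by gcongr
      _ = 1 / w := by field_simp
  linarith

end RandomRestriction

section Codes

open Finset

variable {n d : ℕ}

/-- The set of coordinates at which a word vanishes. -/
def zeroSet {A : Type*} [Zero A] [DecidableEq A] (f : Fin n → A) : Finset (Fin n) := {i | f i = 0}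

theorem mem_zeroSet {A : Type*} [Zero A] [DecidableEq A] {f : Fin n → A} {i : Fin n} :
    i ∈ zeroSet f ↔ f i = 0 := by
  simp [zeroSet]

/-- An additive code `C` of length `n` is maximum distance separable, of dimension `d`, if it has
`|A| ^ d` codewords and a nonzero codeword vanishes at fewer than `d` of the `n` coordinates. -/
structure IsMDS {A : Type*} [AddCommGroup A] [DecidableEq A] (C : AddSubgroup (Fin n → A))
    (d : ℕ) : Prop where
  card_eq : Nat.card C = Nat.card A ^ d
  le_length : d ≤ n
  eq_zero : ∀ f ∈ C, d ≤ #(zeroSet f) → f = 0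

/-- The encoding map of the Reed–Solomon code: evaluation of the polynomial with coefficients `c` at
the points `x i`. -/
def reedSolomon {R : Type*} [CommRing R] (x : Fin n → R) (d : ℕ) : (Fin d → R) →+ (Fin n → R) where
  toFun c i := ∑ k : Fin d, c k * x i ^ (k : ℕ)
  map_zero' := by
    ext
    simp
  map_add' c c' := by
    ext
    simp [add_mul, sum_add_distrib]

section ReedSolomon

variable {R : Type*} [CommRing R] [IsDomain R] {x : Fin n → R}

theorem eq_zero_of_le_card_zeroSet_reedSolomon [DecidableEq R] (hx : Function.Injective x)
    {c : Fin d → R} (hc : d ≤ #(zeroSet (reedSolomon x d c))) : c = 0 := by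
  obtain ⟨J, hJ, hcard⟩ := exists_subset_card_eq hc
  exact Matrix.eq_zero_of_forall_index_sum_mul_pow_eq_zero
    (hx.comp (J.orderEmbOfFin hcard).injective)
    fun k => mem_zeroSet.1 (hJ (J.orderEmbOfFin_mem hcard k))

theorem reedSolomon_injective (hx : Function.Injective x) (hd : d ≤ n) :
    Function.Injective (reedSolomon x d) := by
  classical
  refine (injective_iff_map_eq_zero _).2 fun c hc => ?_
  refine eq_zero_of_le_card_zeroSet_reedSolomon hx ?_
  simpa [hc, zeroSet] using hd

theorem isMDS_range_reedSolomon [DecidableEq R] (hx : Function.Injective x) (hd : d ≤ n) :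
    IsMDS (reedSolomon x d).range d where
  card_eq := by
    rw [← Nat.card_congr (AddMonoidHom.ofInjective (reedSolomon_injective hx hd)).toEquiv,
      Nat.card_fun, Nat.card_fin]
  le_length := hd
  eq_zero := by
    rintro _ ⟨c, rfl⟩ hc
    rw [eq_zero_of_le_card_zeroSet_reedSolomon hx hc, map_zero]

end ReedSolomon

variable {A : Type*} [AddCommGroup A] [DecidableEq A] [Fintype A]
  {C : AddSubgroup (Fin n → A)} [Fintype C]

theorem IsMDS.card_filter_zero_le (hC : IsMDS C d) {J : Finset (Fin n)} (hJ : #J ≤ d) :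
    #{f : C | J ⊆ zeroSet f.1} ≤ Fintype.card A ^ (d - #J) := by
  obtain ⟨J', hJJ', -, hJ'⟩ := exists_subsuperset_card_eq (subset_univ J) hJ
    (by simpa using hC.le_length)
  have hcard : Fintype.card ((J' \ J : Finset (Fin n)) → A) = Fintype.card A ^ (d - #J) := by
    rw [Fintype.card_fun, Fintype.card_coe, card_sdiff_of_subset hJJ', hJ']
  rw [← hcard, ← card_univ]
  refine card_le_card_of_injOn (fun f i => f.1 i) (fun _ _ => mem_univ _) ?_
  intro f hf g hg hfg
  simp only [coe_filter, mem_univ, true_and, Set.mem_ofPred_eq] at hf hg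
  have hzero : J' ⊆ zeroSet (f - g).1 := by
    intro i hi
    rw [mem_zeroSet, AddSubgroup.coe_sub, Pi.sub_apply, sub_eq_zero]
    by_cases hiJ : i ∈ J
    · rw [mem_zeroSet.1 (hf hiJ), mem_zeroSet.1 (hg hiJ)]
    · exact congrFun hfg ⟨i, mem_sdiff.2 ⟨hi, hiJ⟩⟩
  exact sub_eq_zero.1 (Subtype.ext (hC.eq_zero _ (f - g).2 (hJ' ▸ card_le_card hzero)))

theorem IsMDS.card_filter_zeroSet_eq_le (hC : IsMDS C d) (J : Finset (Fin n)) :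
    (#{f ∈ univ.erase (0 : C) | zeroSet f.1 = J} : ℝ) ≤
      (Fintype.card A : ℝ) ^ d / (Fintype.card A : ℝ) ^ #J := by
  rcases le_or_gt d #J with hJ | hJ
  · have hempty : ({f ∈ univ.erase (0 : C) | zeroSet f.1 = J} : Finset C) = ∅ := by
      refine filter_eq_empty_iff.2 fun f hf hfJ => ne_of_mem_erase hf (Subtype.ext ?_)
      exact hC.eq_zero _ f.2 (hfJ ▸ hJ)
    rw [hempty, card_empty, Nat.cast_zero]
    positivity
  · have hA : (Fintype.card A : ℝ) ≠ 0 := Nat.cast_ne_zero.2 Fintype.card_ne_zero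
    rw [div_eq_mul_inv, ← pow_sub₀ _ hA hJ.le]
    have hsub : ({f ∈ univ.erase (0 : C) | zeroSet f.1 = J} : Finset C) ⊆
        ({f | J ⊆ zeroSet f.1} : Finset C) :=
      fun f hf => mem_filter.2 ⟨mem_univ f, (mem_filter.1 hf).2.ge⟩
    exact_mod_cast (card_le_card hsub).trans (hC.card_filter_zero_le hJ.le)

theorem IsMDS.sum_card_zeroSet_le (hC : IsMDS C d) {φ : ℕ → ℝ} (hφ : ∀ j, 0 ≤ φ j) :
    ∑ f : C, φ #(zeroSet f.1) ≤ φ n +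
      ∑ J : Finset (Fin n), (Fintype.card A : ℝ) ^ d / (Fintype.card A : ℝ) ^ #J * φ #J := by
  have hzero : #(zeroSet (0 : C).1) = n := by simp [zeroSet]
  rw [← add_sum_erase _ _ (mem_univ (0 : C)), hzero,
    ← sum_fiberwise (univ.erase (0 : C)) (fun f => zeroSet f.1)]
  gcongr with J
  calc ∑ f ∈ univ.erase (0 : C) with zeroSet f.1 = J, φ #(zeroSet f.1)
      = #{f ∈ univ.erase (0 : C) | zeroSet f.1 = J} * φ #J := by
        rw [sum_congr rfl fun f hf => by rw [(mem_filter.1 hf).2], sum_const, nsmul_eq_mul]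
    _ ≤ _ := by
        gcongr
        exacts [hφ _, hC.card_filter_zeroSet_eq_le J]

end Codes

section Graphs

open Finset

variable {n : ℕ} {A : Type*}

/-- The graph of `f`, the set of variables `X (i, f i)` of the monomial attached to `f`. -/
def graph (f : Fin n → A) : Finset (Fin n × A) :=
  univ.map ⟨fun i => (i, f i), fun _ _ h => congrArg Prod.fst h⟩

theorem mem_graph {f : Fin n → A} {v : Fin n × A} : v ∈ graph f ↔ f v.1 = v.2 := by
  simp only [graph, mem_map, mem_univ, true_and]
  exact ⟨by rintro ⟨i, rfl⟩; rfl, fun h => ⟨v.1, Prod.ext rfl h⟩⟩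

theorem card_graph (f : Fin n → A) : #(graph f) = n := by
  simp [graph]

theorem graph_injective : Function.Injective (graph : (Fin n → A) → Finset (Fin n × A)) := by
  intro f g h
  ext i
  exact (mem_graph.1 (h ▸ mem_graph.2 rfl : (i, f i) ∈ graph g)).symm

variable [DecidableEq A] {f f' g g' : Fin n → A}

theorem eq_or_eq_of_graph_sdiff_eq (h₁ : graph f \ graph f' = graph g \ graph g')
    (h₂ : graph f' \ graph f = graph g' \ graph g) (i : Fin n) :
    f i = f' i ∧ g i = g' i ∨ f i = g i ∧ f' i = g' i := by
  have hf := Finset.ext_iff.1 h₁ (i, f i)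
  have hg := Finset.ext_iff.1 h₁ (i, g i)
  have hf' := Finset.ext_iff.1 h₂ (i, f' i)
  simp only [mem_sdiff, mem_graph] at hf hg hf'
  grind

variable [AddCommGroup A]

theorem card_graph_inter (f g : Fin n → A) : #(graph f ∩ graph g) = #(zeroSet (f - g)) := by
  refine (card_nbij' (fun i => (i, f i)) Prod.fst ?_ ?_ ?_ ?_).symm
  · intro i hi
    have hi : f i = g i := sub_eq_zero.1 (mem_zeroSet.1 hi)
    simp [mem_graph, hi]
  · intro v hv
    simp only [coe_inter, Set.mem_inter_iff, mem_coe, mem_graph] at hv ⊢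
    rw [mem_zeroSet, Pi.sub_apply, hv.1, hv.2, sub_self]
  · exact fun _ _ => rfl
  · intro v hv
    exact Prod.ext rfl (mem_graph.1 (mem_inter.1 hv).1)

theorem zeroSet_sub_comm (f g : Fin n → A) : zeroSet (f - g) = zeroSet (g - f) := by
  ext i
  simp only [mem_zeroSet, Pi.sub_apply, sub_eq_zero, eq_comm]

theorem card_graph_sdiff (f g : Fin n → A) : #(graph f \ graph g) = n - #(zeroSet (f - g)) := by
  rw [card_sdiff, inter_comm, card_graph_inter, card_graph]

theorem card_graph_union (f g : Fin n → A) :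
    #(graph f ∪ graph g) = 2 * n - #(zeroSet (f - g)) := by
  rw [card_union, card_graph_inter, card_graph, card_graph, two_mul]

theorem card_union_graph_ge (h : ∀ i, f i = f' i ∨ f i = g i) :
    3 * n - #(zeroSet (f - f')) - #(zeroSet (f - g)) ≤
      #((graph f ∪ graph f') ∪ (graph g ∪ graph g')) := by
  have hdisj : Disjoint (graph f' \ graph f) (graph g \ graph f) := by
    refine disjoint_left.2 fun v hv hv' => ?_
    simp only [mem_sdiff, mem_graph] at hv hv'
    rcases h v.1 with h | h
    · exact hv.2 (h.trans hv.1)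
    · exact hv'.2 (h.trans hv'.1)
  have hdisj' : Disjoint (graph f) (graph f' \ graph f ∪ graph g \ graph f) :=
    disjoint_union_right.2 ⟨disjoint_sdiff, disjoint_sdiff⟩
  have hsub : graph f ∪ (graph f' \ graph f ∪ graph g \ graph f) ⊆
      (graph f ∪ graph f') ∪ (graph g ∪ graph g') := by
    intro v
    simp only [mem_union, mem_sdiff]
    tauto
  have hcard := card_le_card hsub
  rw [card_union_of_disjoint hdisj', card_union_of_disjoint hdisj, card_graph, card_graph_sdiff,
    card_graph_sdiff, zeroSet_sub_comm f', zeroSet_sub_comm g] at hcard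
  omega

theorem max_le_card_graph_sdiff_union {r : ℕ} {G₁ G₂ : Finset (Fin n × A)}
    (h₁ : G₁ ∈ (graph f).powersetCard r) (h₂ : G₂ ∈ (graph g).powersetCard r) :
    max (n - r) (2 * (n - r) - #(zeroSet (f - g))) ≤ #(graph f \ G₁ ∪ graph g \ G₂) := by
  rw [mem_powersetCard] at h₁ h₂
  have hf : #(graph f \ G₁) = n - r := by rw [card_sdiff_of_subset h₁.1, card_graph, h₁.2]
  have hg : #(graph g \ G₂) = n - r := by rw [card_sdiff_of_subset h₂.1, card_graph, h₂.2]
  have hinter : #(graph f \ G₁ ∩ (graph g \ G₂)) ≤ #(zeroSet (f - g)) := by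
    rw [← card_graph_inter]
    exact card_le_card (inter_subset_inter sdiff_subset sdiff_subset)
  have hleft : #(graph f \ G₁) ≤ #(graph f \ G₁ ∪ graph g \ G₂) := card_le_card subset_union_left
  have hsum := card_union_add_card_inter (graph f \ G₁) (graph g \ G₂)
  omega

/-- A bound, up to the number of sets of `m + (n - r)` variables, for the contribution of graphs of
`f, f', g, g'` to the second moment of the Gram matrix in terms of the number `j` of zeros of
`f - f'` and the number `i` of zeros of `f - g`; `q` stands for the density of those sets. -/
noncomputable def overlapWeight (n r : ℕ) (p q : ℝ) (j i : ℕ) : ℝ :=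
  if n ≤ j + i then
    p ^ (3 * n - j - i) * (j.choose r : ℝ) ^ 2 * q ^ max (n - r) (2 * (n - r) - i) *
      (1 - q) ^ (n - j)
  else 0

theorem overlapWeight_nonneg {r j i : ℕ} {p q : ℝ} (hp : 0 ≤ p) (hq0 : 0 ≤ q) (hq1 : q ≤ 1) :
    0 ≤ overlapWeight n r p q j i := by
  unfold overlapWeight
  have := sub_nonneg.2 hq1
  split_ifs <;> positivity

variable [Fintype A] {r m : ℕ} {p q K : ℝ}

theorem quadCount_graph_le (hq0 : 0 ≤ q) (hq1 : q ≤ 1) (hK : 0 ≤ K)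
    (hT : ∀ S B : Finset (Fin n × A), #S ≤ 2 * n → #B ≤ n →
      (#{T | #T = m + (n - r) ∧ S ⊆ T ∧ Disjoint T B} : ℝ) ≤ K * q ^ #S * (1 - q) ^ #B)
    (h : f - f' = g - g') :
    (quadCount r m (graph f) (graph f') (graph g) (graph g') : ℝ) ≤
      (#(zeroSet (f - f'))).choose r ^ 2 * (K * q ^ max (n - r) (2 * (n - r) - #(zeroSet (f - g))) *
        (1 - q) ^ (n - #(zeroSet (f - f')))) := by
  refine (Nat.cast_le.2 (quadCount_le ..)).trans ?_
  rw [Nat.cast_sum]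
  have hterm : ∀ G ∈ (graph f ∩ graph f').powersetCard r ×ˢ (graph g ∩ graph g').powersetCard r,
      (#{T | #T = m + (#(graph f) - r) ∧ graph f \ G.1 ∪ graph g \ G.2 ⊆ T ∧
        Disjoint T (graph f' \ graph f)} : ℝ) ≤
      K * q ^ max (n - r) (2 * (n - r) - #(zeroSet (f - g))) *
        (1 - q) ^ (n - #(zeroSet (f - f'))) := by
    intro G hG
    obtain ⟨h₁, h₂⟩ := mem_product.1 hG
    have h₁ := powersetCard_mono inter_subset_left h₁
    have h₂ := powersetCard_mono inter_subset_left h₂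
    have hB : #(graph f' \ graph f) = n - #(zeroSet (f - f')) := by
      rw [card_graph_sdiff, zeroSet_sub_comm]
    have hS : #(graph f \ G.1 ∪ graph g \ G.2) ≤ 2 * n := by
      refine (card_le_card (union_subset_union sdiff_subset sdiff_subset)).trans ?_
      rw [card_graph_union]
      exact Nat.sub_le _ _
    have := sub_nonneg.2 hq1
    rw [card_graph]
    refine (hT _ _ hS (hB ▸ Nat.sub_le _ _)).trans ?_
    rw [hB]
    gcongr K * ?_ * _
    exact pow_le_pow_of_le_one hq0 hq1 (max_le_card_graph_sdiff_union h₁ h₂)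
  refine (sum_le_card_nsmul _ _ _ hterm).trans_eq ?_
  rw [card_product, card_powersetCard, card_powersetCard, card_graph_inter, card_graph_inter, ← h,
    nsmul_eq_mul, Nat.cast_mul, sq]

theorem pow_mul_quadCount_graph_le (hp0 : 0 ≤ p) (hp1 : p ≤ 1) (hq0 : 0 ≤ q) (hq1 : q ≤ 1)
    (hK : 0 ≤ K)
    (hT : ∀ S B : Finset (Fin n × A), #S ≤ 2 * n → #B ≤ n →
      (#{T | #T = m + (n - r) ∧ S ⊆ T ∧ Disjoint T B} : ℝ) ≤ K * q ^ #S * (1 - q) ^ #B)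
    (f f' g g' : Fin n → A) :
    p ^ #((graph f ∪ graph f') ∪ (graph g ∪ graph g')) *
        quadCount r m (graph f) (graph f') (graph g) (graph g') ≤
      if f - f' = g - g' then K * overlapWeight n r p q #(zeroSet (f - f')) #(zeroSet (f - g))
      else 0 := by
  by_cases hquad : quadCount r m (graph f) (graph f') (graph g) (graph g') = 0
  · rw [hquad, Nat.cast_zero, mul_zero]
    split_ifs
    · exact mul_nonneg hK (overlapWeight_nonneg hp0 hq0 hq1)
    · exact le_rfl
  obtain ⟨h₁, h₂⟩ := sdiff_eq_of_quadCount_ne_zero hquad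
  have hcases := eq_or_eq_of_graph_sdiff_eq h₁ h₂
  have hdiff : f - f' = g - g' := by
    ext i
    rcases hcases i with ⟨h, h'⟩ | ⟨h, h'⟩ <;> simp [h, h']
  have hcover : n ≤ #(zeroSet (f - f')) + #(zeroSet (f - g)) := by
    have huniv : zeroSet (f - f') ∪ zeroSet (f - g) = univ := eq_univ_of_forall fun i => by
      simp only [mem_union, mem_zeroSet, Pi.sub_apply, sub_eq_zero]
      exact (hcases i).imp And.left And.left
    simpa [huniv] using card_union_le (zeroSet (f - f')) (zeroSet (f - g))
  rw [if_pos hdiff, overlapWeight, if_pos hcover]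
  calc _ ≤ p ^ (3 * n - #(zeroSet (f - f')) - #(zeroSet (f - g))) *
        ((#(zeroSet (f - f'))).choose r ^ 2 *
          (K * q ^ max (n - r) (2 * (n - r) - #(zeroSet (f - g))) *
            (1 - q) ^ (n - #(zeroSet (f - f'))))) :=
        mul_le_mul (pow_le_pow_of_le_one hp0 hp1
            (card_union_graph_ge fun i => (hcases i).imp And.left And.left))
          (quadCount_graph_le hq0 hq1 hK hT hdiff) (Nat.cast_nonneg _) (pow_nonneg hp0 _)
    _ = _ := by ring

end Graphs

section FamilyMoments

open Finset

variable {σ : Type*} [Fintype σ] [DecidableEq σ] (p : ℝ) (𝒜 : Finset (Finset σ))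

theorem restrictExp_card_filter_subset :
    restrictExp p (fun V => (#{A ∈ 𝒜 | A ⊆ V} : ℝ)) = ∑ A ∈ 𝒜, p ^ #A := by
  simpa using restrictExp_sum_filter_subset p 𝒜 id (fun _ => 1)

theorem restrictExp_card_filter_subset_sq :
    restrictExp p (fun V => (#{A ∈ 𝒜 | A ⊆ V} : ℝ) ^ 2) =
      ∑ x ∈ 𝒜 ×ˢ 𝒜, p ^ #(x.1 ∪ x.2) := by
  have h := restrictExp_sum_filter_subset p (𝒜 ×ˢ 𝒜) (fun x => x.1 ∪ x.2) (fun _ => 1)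
  simp only [mul_one] at h
  rw [← h]
  congr 1
  ext V
  simp only [union_subset_iff, sum_const, nsmul_eq_mul, mul_one,
    filter_product (s := 𝒜) (t := 𝒜) (· ⊆ V) (· ⊆ V), card_product, Nat.cast_mul, sq]

theorem restrictExp_sum_gram_sq (r m : ℕ) :
    restrictExp p (fun V => ((∑ T, ∑ T', ((∑ A ∈ 𝒜 with A ⊆ V, shiftMatrix r m A).transpose *
      ∑ A ∈ 𝒜 with A ⊆ V, shiftMatrix r m A) T T' ^ 2 : ℕ) : ℝ)) =
      ∑ x ∈ (𝒜 ×ˢ 𝒜) ×ˢ 𝒜 ×ˢ 𝒜, p ^ #((x.1.1 ∪ x.1.2) ∪ (x.2.1 ∪ x.2.2)) *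
        quadCount r m x.1.1 x.1.2 x.2.1 x.2.2 := by
  rw [← restrictExp_sum_filter_subset p ((𝒜 ×ˢ 𝒜) ×ˢ 𝒜 ×ˢ 𝒜)
    (fun x => (x.1.1 ∪ x.1.2) ∪ (x.2.1 ∪ x.2.2))
    (fun x => (quadCount r m x.1.1 x.1.2 x.2.1 x.2.2 : ℝ))]
  congr 1
  ext V
  rw [sum_gram_sq_eq_sum_quadCount, Nat.cast_sum]
  refine sum_congr ?_ fun _ _ => rfl
  ext x
  simp only [mem_product, mem_filter, union_subset_iff]
  tauto

end FamilyMoments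

section GraphFamily

open Finset

variable {n : ℕ} {A : Type*} [AddCommGroup A] (C : AddSubgroup (Fin n → A)) [Fintype C]

/-- The graphs of the words of `C`, the supports of the monomials of a Nisan–Wigderson
polynomial when `C` is a Reed–Solomon code. -/
def graphFamily : Finset (Finset (Fin n × A)) :=
  univ.map ⟨fun f : C => graph f.1, graph_injective.comp Subtype.val_injective⟩

variable {C}

theorem card_of_mem_graphFamily {S : Finset (Fin n × A)} (hS : S ∈ graphFamily C) : #S = n := by
  obtain ⟨f, -, rfl⟩ := mem_map.1 hS
  exact card_graph f.1

theorem sum_graphFamily {M : Type*} [AddCommMonoid M] (φ : Finset (Fin n × A) → M) :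
    ∑ S ∈ graphFamily C, φ S = ∑ f : C, φ (graph f.1) :=
  sum_map _ _ _

theorem restrictExp_card_graphFamily [Fintype A] [DecidableEq A] (p : ℝ) :
    restrictExp p (fun V => (#{S ∈ graphFamily C | S ⊆ V} : ℝ)) = Fintype.card C * p ^ n := by
  simp [restrictExp_card_filter_subset, sum_graphFamily, card_graph]

theorem restrictExp_card_graphFamily_sq [Fintype A] [DecidableEq A] (p : ℝ) :
    restrictExp p (fun V => (#{S ∈ graphFamily C | S ⊆ V} : ℝ) ^ 2) =
      Fintype.card C * ∑ h : C, p ^ (2 * n - #(zeroSet h.1)) := by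
  rw [restrictExp_card_filter_subset_sq, sum_product, sum_graphFamily, ← card_univ,
    ← nsmul_eq_mul, ← sum_const]
  refine sum_congr rfl fun f _ => ?_
  simp only [sum_graphFamily, card_graph_union]
  rw [← Equiv.sum_comp (Equiv.subLeft f)]
  simp

theorem sum_sub_eq_sub {K : Type*} [AddCommGroup K] [Fintype K] [DecidableEq K]
    (φ : K → K → ℝ) :
    ∑ f, ∑ f', ∑ g, ∑ g', (if f - f' = g - g' then φ (f - f') (f - g) else 0) =
      Fintype.card K * ∑ h, ∑ k, φ h k := by
  rw [← card_univ, ← nsmul_eq_mul, ← sum_const]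
  refine sum_congr rfl fun f _ => ?_
  rw [← Equiv.sum_comp (Equiv.subLeft f)]
  refine sum_congr rfl fun h _ => ?_
  rw [← Equiv.sum_comp (Equiv.subLeft f)]
  refine sum_congr rfl fun k _ => ?_
  rw [← Equiv.sum_comp (Equiv.subLeft (f - k))]
  simp

theorem restrictExp_sum_gram_graphFamily_le_sum_overlapWeight [Fintype A] [DecidableEq A]
    {r m : ℕ} {p q K : ℝ} (hp0 : 0 ≤ p) (hp1 : p ≤ 1) (hq0 : 0 ≤ q) (hq1 : q ≤ 1) (hK : 0 ≤ K)
    (hT : ∀ S B : Finset (Fin n × A), #S ≤ 2 * n → #B ≤ n →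
      (#{T | #T = m + (n - r) ∧ S ⊆ T ∧ Disjoint T B} : ℝ) ≤ K * q ^ #S * (1 - q) ^ #B) :
    restrictExp p (fun V => ((∑ T, ∑ T',
      ((∑ S ∈ graphFamily C with S ⊆ V, shiftMatrix r m S).transpose *
        ∑ S ∈ graphFamily C with S ⊆ V, shiftMatrix r m S) T T' ^ 2 : ℕ) : ℝ)) ≤
      Fintype.card C *
        ∑ h : C, ∑ k : C, K * overlapWeight n r p q #(zeroSet h.1) #(zeroSet k.1) := by
  classical
  rw [restrictExp_sum_gram_sq, sum_product, sum_product, ← sum_sub_eq_sub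
    fun h k : C => K * overlapWeight n r p q #(zeroSet h.1) #(zeroSet k.1)]
  simp only [sum_product, sum_graphFamily]
  refine sum_le_sum fun f _ => sum_le_sum fun f' _ => sum_le_sum fun g _ =>
    sum_le_sum fun g' _ => ?_
  refine (pow_mul_quadCount_graph_le hp0 hp1 hq0 hq1 hK hT f.1 f'.1 g.1 g'.1).trans_eq ?_
  exact if_congr (by rw [Subtype.ext_iff]; rfl) rfl rfl

end GraphFamily

section OverlapWeight

variable {n r : ℕ} {p q : ℝ}

theorem overlapWeight_zero_right :
    overlapWeight n r p q n 0 = p ^ (2 * n) * (n.choose r : ℝ) ^ 2 * q ^ (2 * (n - r)) := by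
  rw [overlapWeight, if_pos (Nat.le_add_right n 0), Nat.sub_self, pow_zero, mul_one,
    max_eq_right (by omega), show 3 * n - n - 0 = 2 * n by omega, Nat.sub_zero]

theorem pow_mul_overlapWeight_self_le (hp : 0 ≤ p) (hq0 : 0 ≤ q) (hq1 : q ≤ 1) {i : ℕ}
    (hi : i ≤ n) : (p * q) ^ i * overlapWeight n r p q n i ≤ overlapWeight n r p q n 0 := by
  have hexp : 2 * n = 3 * n - n - i + i := by omega
  rw [overlapWeight_zero_right, overlapWeight, if_pos (Nat.le_add_right n i), Nat.sub_self,
    pow_zero, mul_one, hexp, pow_add]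
  calc (p * q) ^ i * (p ^ (3 * n - n - i) * (n.choose r : ℝ) ^ 2 *
        q ^ max (n - r) (2 * (n - r) - i))
      = p ^ (3 * n - n - i) * p ^ i * (n.choose r : ℝ) ^ 2 *
        (q ^ i * q ^ max (n - r) (2 * (n - r) - i)) := by ring
    _ ≤ p ^ (3 * n - n - i) * p ^ i * (n.choose r : ℝ) ^ 2 * q ^ (2 * (n - r)) := by
      rw [← pow_add q]
      gcongr _ * ?_
      exact pow_le_pow_of_le_one hq0 hq1 (by omega)

theorem choose_mul_pow_mul_overlapWeight_right_le (hp : 0 ≤ p) (hq0 : 1 / 4 ≤ q) (hq1 : q ≤ 1)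
    {B : ℝ} {j : ℕ} (hj : j ≤ n) (hB : (1 - q) ^ (n - j) ≤ B * q ^ (n - j)) :
    n.choose r * p ^ j * overlapWeight n r p q j n ≤
      B * j.choose r * 4 ^ (j - r) * overlapWeight n r p q n 0 := by
  obtain hjr | hjr := lt_or_ge j r
  · simp [overlapWeight, Nat.choose_eq_zero_of_lt hjr]
  have : 0 < q := by linarith
  have h₁ : 0 ≤ 1 - q := sub_nonneg.2 hq1
  have hp' : p ^ (2 * n) = p ^ j * p ^ (3 * n - j - n) := by rw [← pow_add]; congr 1; omega
  have hq' : q ^ (2 * (n - r)) = q ^ (n - r) * q ^ (n - j) * q ^ (j - r) := by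
    rw [← pow_add, ← pow_add]; congr 1; omega
  have hchoose : (j.choose r : ℝ) ≤ n.choose r := mod_cast Nat.choose_le_choose r hj
  have h4 : 1 ≤ (4 * q) ^ (j - r) := one_le_pow₀ (by linarith)
  have hB0 : 0 ≤ B * q ^ (n - j) := (pow_nonneg h₁ _).trans hB
  rw [overlapWeight_zero_right, overlapWeight, if_pos (Nat.le_add_left n j), hp', hq',
    max_eq_left (by omega)]
  calc n.choose r * p ^ j * (p ^ (3 * n - j - n) * (j.choose r : ℝ) ^ 2 * q ^ (n - r) *
        (1 - q) ^ (n - j))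
      = p ^ j * p ^ (3 * n - j - n) * n.choose r * j.choose r * q ^ (n - r) *
        (j.choose r * (1 - q) ^ (n - j) * 1) := by ring
    _ ≤ p ^ j * p ^ (3 * n - j - n) * n.choose r * j.choose r * q ^ (n - r) *
        (n.choose r * (B * q ^ (n - j)) * (4 * q) ^ (j - r)) := by gcongr
    _ = _ := by rw [mul_pow]; ring

theorem pow_mul_overlapWeight_le (hp : 0 ≤ p) (hq0 : 1 / 4 ≤ q) (hq1 : q ≤ 1) {i j : ℕ}
    (hi : i ≤ n) (hj : j ≤ n) :
    p ^ (j + i - n) * overlapWeight n r p q j i ≤ 4 ^ n * overlapWeight n r p q n 0 := by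
  have hq : 0 < q := by linarith
  rw [overlapWeight_zero_right, overlapWeight]
  split_ifs with hji
  · have hp' : p ^ (2 * n) = p ^ (j + i - n) * p ^ (3 * n - j - i) := by
      rw [← pow_add]; congr 1; omega
    have hchoose : (j.choose r : ℝ) ≤ n.choose r := mod_cast Nat.choose_le_choose r hj
    have hqpow : q ^ max (n - r) (2 * (n - r) - i) ≤ 4 ^ n * q ^ (2 * (n - r)) :=
      calc q ^ max (n - r) (2 * (n - r) - i) ≤ 1 * q ^ (n - r) := by
            rw [one_mul]; exact pow_le_pow_of_le_one hq.le hq1 (le_max_left _ _)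
        _ ≤ (4 * q) ^ (n - r) * q ^ (n - r) := by
            gcongr; exact one_le_pow₀ (by linarith)
        _ = 4 ^ (n - r) * q ^ (2 * (n - r)) := by rw [mul_pow]; ring
        _ ≤ 4 ^ n * q ^ (2 * (n - r)) := by
            gcongr
            exacts [by norm_num, Nat.sub_le n r]
    calc p ^ (j + i - n) * (p ^ (3 * n - j - i) * (j.choose r : ℝ) ^ 2 *
          q ^ max (n - r) (2 * (n - r) - i) * (1 - q) ^ (n - j))
        ≤ p ^ (j + i - n) * (p ^ (3 * n - j - i) * (n.choose r : ℝ) ^ 2 *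
          (4 ^ n * q ^ (2 * (n - r))) * 1) := by
          gcongr
          exact pow_le_one₀ (sub_nonneg.2 hq1) (by linarith)
      _ = _ := by rw [hp']; ring
  · rw [mul_zero]
    positivity

end OverlapWeight

section WeightedSums

open Finset

theorem sum_pow_card_finset (ι : Type*) [Fintype ι] (x : ℝ) :
    ∑ J : Finset ι, x ^ #J = (x + 1) ^ Fintype.card ι := by
  simpa using Fintype.sum_pow_mul_eq_add_pow ι x 1

theorem sum_choose_mul_pow_card {n r : ℕ} (hr : r ≤ n) (x : ℝ) :
    ∑ J : Finset (Fin n), (#J).choose r * x ^ (#J - r) = n.choose r * (x + 1) ^ (n - r) := by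
  have h := sum_powerset_apply_card (fun j => (j.choose r : ℝ) * x ^ (j - r))
    (x := (univ : Finset (Fin n)))
  have hlow : ∑ j ∈ range r, n.choose j • ((j.choose r : ℝ) * x ^ (j - r)) = 0 :=
    sum_eq_zero fun j hj => by
      rw [Nat.choose_eq_zero_of_lt (mem_range.1 hj), Nat.cast_zero, zero_mul, smul_zero]
  rw [powerset_univ, card_fin, show n + 1 = r + (n - r + 1) by omega, sum_range_add, hlow,
    zero_add] at h
  rw [h, add_pow, mul_sum]
  refine sum_congr rfl fun i _ => ?_
  have hchoose := Nat.choose_mul (n := n) (k := r + i) (s := r) (Nat.le_add_right r i)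
  rw [Nat.add_sub_cancel_left] at hchoose ⊢
  rw [nsmul_eq_mul, ← mul_assoc, one_pow, mul_one, ← Nat.cast_mul, hchoose, Nat.cast_mul]
  ring

theorem one_add_pow_le_one_add_two_mul {x : ℝ} {n : ℕ} (hx : 0 ≤ x) (h : n * x ≤ 1 / 2) :
    (x + 1) ^ n ≤ 1 + 2 * (n * x) := by
  have hexp : (x + 1) ^ n ≤ Real.exp (n * x) := by
    rw [Real.exp_nat_mul]
    exact pow_le_pow_left₀ (by linarith) (Real.add_one_le_exp x) n
  have hinv : Real.exp (n * x) * Real.exp (-(n * x)) = 1 := by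
    rw [← Real.exp_add, add_neg_cancel, Real.exp_zero]
  have hneg := Real.add_one_le_exp (-(n * x))
  have hpos := Real.exp_pos (n * x)
  have hnx : 0 ≤ n * x := by positivity
  generalize n * x = y at *
  nlinarith

variable {n r d : ℕ} {p q ψ : ℝ}

theorem overlapWeight_self_self_le (hp : 0 < p) (hq0 : 1 / 4 ≤ q) (hq1 : q ≤ 1)
    (hψ : 4 ^ n ≤ ψ ^ d * p ^ n) :
    overlapWeight n r p q n n ≤ ψ ^ d * overlapWeight n r p q n 0 := by
  have hq : 0 < q := by linarith
  have hψ0 : 0 ≤ ψ ^ d := by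
    have := pow_pos hp n
    by_contra! h
    nlinarith [pow_pos (by norm_num : (0 : ℝ) < 4) n]
  calc overlapWeight n r p q n n
      ≤ (4 * q) ^ n * overlapWeight n r p q n n :=
        le_mul_of_one_le_left (overlapWeight_nonneg hp.le hq.le hq1) (one_le_pow₀ (by linarith))
    _ ≤ ψ ^ d * p ^ n * q ^ n * overlapWeight n r p q n n := by
        rw [mul_pow]
        have := overlapWeight_nonneg (n := n) (r := r) (j := n) (i := n) hp.le hq.le hq1
        gcongr
    _ = ψ ^ d * ((p * q) ^ n * overlapWeight n r p q n n) := by rw [mul_pow]; ring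
    _ ≤ ψ ^ d * overlapWeight n r p q n 0 := by
        gcongr
        exact pow_mul_overlapWeight_self_le hp.le hq.le hq1 le_rfl

theorem sum_div_pow_mul_overlapWeight_left_le (hn : 8 ≤ n) (hp : 0 < p) (hq0 : 1 / 4 ≤ q)
    (hq1 : q ≤ 1) (hψ : 0 < ψ) (hψp : (n : ℝ) ^ 2 ≤ ψ * p) :
    ∑ I : Finset (Fin n), ψ ^ d / ψ ^ #I * overlapWeight n r p q n #I ≤
      2 * (ψ ^ d * overlapWeight n r p q n 0) := by
  have hq : 0 < q := by linarith
  have hn' : (8 : ℝ) ≤ n := mod_cast hn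
  have hW := overlapWeight_nonneg (n := n) (r := r) (j := n) (i := 0) hp.le hq.le hq1
  have hterm (I : Finset (Fin n)) : ψ ^ d / ψ ^ #I * overlapWeight n r p q n #I ≤
      ψ ^ d * overlapWeight n r p q n 0 * (1 / (ψ * p * q)) ^ #I := by
    have h := pow_mul_overlapWeight_self_le (r := r) hp.le hq.le hq1 (card_finset_fin_le I)
    calc ψ ^ d / ψ ^ #I * overlapWeight n r p q n #I
        = ψ ^ d / ψ ^ #I / (p * q) ^ #I * ((p * q) ^ #I * overlapWeight n r p q n #I) := by
          field_simp
      _ ≤ ψ ^ d / ψ ^ #I / (p * q) ^ #I * overlapWeight n r p q n 0 := by gcongr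
      _ = _ := by rw [one_div_pow, mul_pow, mul_pow, mul_pow]; field_simp
  have hx : n * (1 / (ψ * p * q)) ≤ 1 / 2 := by
    have : (n : ℝ) ^ 2 * (1 / 4) ≤ ψ * p * q := by gcongr
    rw [mul_one_div, div_le_div_iff₀ (by positivity) two_pos]
    nlinarith
  refine (sum_le_sum fun I _ => hterm I).trans ?_
  rw [← mul_sum, sum_pow_card_finset, mul_comm, Fintype.card_fin]
  gcongr
  exact (one_add_pow_le_one_add_two_mul (by positivity) hx).trans (by linarith)

theorem div_pow_mul_overlapWeight_right_le (hn : 0 < n) (hr : r ≤ n) (hp : 0 < p)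
    (hq0 : 1 / 4 ≤ q) (hq1 : q ≤ 1) (hψ : 0 < ψ) (hψp : (n : ℝ) ^ 2 ≤ ψ * p) {j : ℕ}
    (hj : j ≤ n) (hq : (1 - q) ^ (n - j) ≤ 2 * (n : ℝ) ^ (2 * r) * q ^ (n - j)) :
    ψ ^ d / ψ ^ j * overlapWeight n r p q j n ≤
      2 * (ψ ^ d * overlapWeight n r p q n 0) / n.choose r *
        (j.choose r * (4 / (n : ℝ) ^ 2) ^ (j - r)) := by
  obtain hjr | hjr := lt_or_ge j r
  · simp [overlapWeight, Nat.choose_eq_zero_of_lt hjr]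
  have hchoose : (0 : ℝ) < n.choose r := mod_cast Nat.choose_pos hr
  have hW := overlapWeight_nonneg (n := n) (r := r) (j := n) (i := 0) hp.le
    (by linarith) hq1
  have h := choose_mul_pow_mul_overlapWeight_right_le (r := r) hp.le hq0 hq1 hj hq
  have hpow : (n : ℝ) ^ (2 * r) ≤ (ψ * p) ^ j / ((n : ℝ) ^ 2) ^ (j - r) := by
    rw [le_div_iff₀ (by positivity), pow_mul, ← pow_add, Nat.add_sub_cancel' hjr]
    exact pow_le_pow_left₀ (by positivity) hψp j
  calc ψ ^ d / ψ ^ j * overlapWeight n r p q j n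
      = ψ ^ d / (ψ * p) ^ j / n.choose r *
        (n.choose r * p ^ j * overlapWeight n r p q j n) := by rw [mul_pow]; field_simp
    _ ≤ ψ ^ d / (ψ * p) ^ j / n.choose r *
        (2 * ((ψ * p) ^ j / ((n : ℝ) ^ 2) ^ (j - r)) * j.choose r * 4 ^ (j - r) *
          overlapWeight n r p q n 0) := by
        refine mul_le_mul_of_nonneg_left (h.trans ?_) (by positivity)
        gcongr
    _ = _ := by rw [div_pow]; field_simp

theorem sum_div_pow_mul_overlapWeight_right_le (hn : 8 ≤ n) (hr : r ≤ n) (hp : 0 < p)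
    (hq0 : 1 / 4 ≤ q) (hq1 : q ≤ 1) (hψ : 0 < ψ) (hψp : (n : ℝ) ^ 2 ≤ ψ * p)
    (hq : ∀ i ≤ n, (1 - q) ^ i ≤ 2 * (n : ℝ) ^ (2 * r) * q ^ i) :
    ∑ J : Finset (Fin n), ψ ^ d / ψ ^ #J * overlapWeight n r p q #J n ≤
      4 * (ψ ^ d * overlapWeight n r p q n 0) := by
  have hn' : (8 : ℝ) ≤ n := mod_cast hn
  have hchoose : (0 : ℝ) < n.choose r := mod_cast Nat.choose_pos hr
  have hW := overlapWeight_nonneg (n := n) (r := r) (j := n) (i := 0) hp.le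
    (by linarith) hq1
  have hx : ((n - r : ℕ) : ℝ) * (4 / (n : ℝ) ^ 2) ≤ 1 / 2 := by
    rw [Nat.cast_sub hr, mul_div_assoc', div_le_div_iff₀ (by positivity) two_pos]
    nlinarith [(Nat.cast_nonneg r : (0 : ℝ) ≤ r)]
  have htwo : (4 / (n : ℝ) ^ 2 + 1) ^ (n - r) ≤ 2 :=
    (one_add_pow_le_one_add_two_mul (by positivity) hx).trans (by linarith)
  calc _ ≤ 2 * (ψ ^ d * overlapWeight n r p q n 0) / n.choose r *
        (n.choose r * (4 / (n : ℝ) ^ 2 + 1) ^ (n - r)) := by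
        rw [← sum_choose_mul_pow_card hr, mul_sum]
        exact sum_le_sum fun J _ => div_pow_mul_overlapWeight_right_le (by omega) hr hp hq0 hq1
          hψ hψp (card_finset_fin_le J) (hq _ (Nat.sub_le n #J))
    _ ≤ 2 * (ψ ^ d * overlapWeight n r p q n 0) / n.choose r * (n.choose r * 2) := by gcongr
    _ = _ := by field_simp; ring

theorem div_pow_mul_div_pow_mul_overlapWeight_le (hd : d ≤ n) (hp : 0 < p) (hq0 : 1 / 4 ≤ q)
    (hq1 : q ≤ 1) (hψ : 0 < ψ) (hψp : 1 ≤ ψ * p) (hψd : 16 ^ n ≤ ψ ^ (n - d)) {i j : ℕ}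
    (hi : i ≤ n) (hj : j ≤ n) :
    ψ ^ d / ψ ^ j * (ψ ^ d / ψ ^ i * overlapWeight n r p q j i) ≤
      ψ ^ d * overlapWeight n r p q n 0 / 4 ^ n := by
  have hW := overlapWeight_nonneg (n := n) (r := r) (j := n) (i := 0) hp.le
    (by linarith) hq1
  obtain hji | hji := lt_or_ge (j + i) n
  · rw [overlapWeight, if_neg (by omega), mul_zero, mul_zero]
    positivity
  have h := pow_mul_overlapWeight_le (r := r) hp.le hq0 hq1 hi hj
  have hψ' : ψ ^ j * ψ ^ i = ψ ^ d * ψ ^ (n - d) * ψ ^ (j + i - n) := by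
    simp only [← pow_add]
    congr 1
    omega
  have h16 : 16 ^ n ≤ ψ ^ (n - d) * (ψ * p) ^ (j + i - n) :=
    hψd.trans (le_mul_of_one_le_right (by positivity) (one_le_pow₀ hψp))
  calc ψ ^ d / ψ ^ j * (ψ ^ d / ψ ^ i * overlapWeight n r p q j i)
      = ψ ^ d * ψ ^ d / (ψ ^ j * ψ ^ i) * overlapWeight n r p q j i := by field_simp
    _ = ψ ^ d / (ψ ^ (n - d) * (ψ * p) ^ (j + i - n)) *
        (p ^ (j + i - n) * overlapWeight n r p q j i) := by rw [hψ', mul_pow]; field_simp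
    _ ≤ ψ ^ d / 16 ^ n * (4 ^ n * overlapWeight n r p q n 0) := by
      have := overlapWeight_nonneg (n := n) (r := r) (j := j) (i := i) hp.le (by linarith) hq1
      gcongr
    _ = _ := by
      rw [show (16 : ℝ) ^ n = 4 ^ n * 4 ^ n by rw [← mul_pow]; norm_num]
      field_simp

theorem sum_sum_div_pow_mul_overlapWeight_le (hd : d ≤ n) (hp : 0 < p) (hq0 : 1 / 4 ≤ q)
    (hq1 : q ≤ 1) (hψ : 0 < ψ) (hψp : 1 ≤ ψ * p) (hψd : 16 ^ n ≤ ψ ^ (n - d)) :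
    ∑ J : Finset (Fin n), ψ ^ d / ψ ^ #J * ∑ I : Finset (Fin n), ψ ^ d / ψ ^ #I *
      overlapWeight n r p q #J #I ≤ ψ ^ d * overlapWeight n r p q n 0 := by
  have hcard : (#(univ : Finset (Finset (Fin n))) : ℝ) = 2 ^ n := by simp
  simp only [mul_sum]
  refine (sum_le_sum fun J _ => sum_le_sum fun I _ =>
    div_pow_mul_div_pow_mul_overlapWeight_le hd hp hq0 hq1 hψ hψp hψd
    (card_finset_fin_le I) (card_finset_fin_le J)).trans_eq ?_
  rw [sum_const, sum_const, nsmul_eq_mul, nsmul_eq_mul, hcard,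
    show (4 : ℝ) ^ n = 2 ^ n * 2 ^ n by rw [← mul_pow]; norm_num]
  field_simp

theorem IsMDS.sum_sum_overlapWeight_le {A : Type*} [AddCommGroup A] [Fintype A]
    [DecidableEq A] {C : AddSubgroup (Fin n → A)} [Fintype C] (hC : IsMDS C d) (hn : 8 ≤ n)
    (hr : r ≤ n) (hp : 0 < p) (hq0 : 1 / 4 ≤ q) (hq1 : q ≤ 1)
    (hψp : (n : ℝ) ^ 2 ≤ Fintype.card A * p)
    (hq : ∀ i ≤ n, (1 - q) ^ i ≤ 2 * (n : ℝ) ^ (2 * r) * q ^ i)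
    (h4 : 4 ^ n ≤ (Fintype.card A : ℝ) ^ d * p ^ n)
    (h16 : 16 ^ n ≤ (Fintype.card A : ℝ) ^ (n - d)) :
    ∑ h : C, ∑ k : C, overlapWeight n r p q #(zeroSet h.1) #(zeroSet k.1) ≤
      8 * ((Fintype.card A : ℝ) ^ d * overlapWeight n r p q n 0) := by
  have hq' : 0 < q := by linarith
  have hn1 : (1 : ℝ) ≤ n := mod_cast (by omega : 1 ≤ n)
  have hψ : (0 : ℝ) < Fintype.card A := mod_cast Fintype.card_pos
  have hW (j i : ℕ) : 0 ≤ overlapWeight n r p q j i := overlapWeight_nonneg hp.le hq'.le hq1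
  have hW' (j : ℕ) : 0 ≤ overlapWeight n r p q j n + ∑ I : Finset (Fin n),
      (Fintype.card A : ℝ) ^ d / (Fintype.card A : ℝ) ^ #I * overlapWeight n r p q j #I :=
    add_nonneg (hW _ _) (sum_nonneg fun I _ => mul_nonneg (by positivity) (hW _ _))
  have hself := overlapWeight_self_self_le (r := r) hp hq0 hq1 h4
  have hleft := sum_div_pow_mul_overlapWeight_left_le (r := r) (d := d) hn hp hq0 hq1 hψ hψp
  have hright := sum_div_pow_mul_overlapWeight_right_le (d := d) hn hr hp hq0 hq1 hψ hψp hq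
  have hboth := sum_sum_div_pow_mul_overlapWeight_le (r := r) hC.le_length hp hq0 hq1 hψ
    (by nlinarith) h16
  calc _ ≤ ∑ h : C, (overlapWeight n r p q #(zeroSet h.1) n + ∑ I : Finset (Fin n),
        (Fintype.card A : ℝ) ^ d / (Fintype.card A : ℝ) ^ #I *
          overlapWeight n r p q #(zeroSet h.1) #I) :=
        sum_le_sum fun h _ => hC.sum_card_zeroSet_le (hW _)
    _ ≤ _ := hC.sum_card_zeroSet_le hW'
    _ ≤ _ := by
        simp only [mul_add, sum_add_distrib]
        linarith

end WeightedSums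

section BinomialEstimates

theorem choose_mul_descFactorial_add {N k a b : ℕ} (ha : a ≤ k) (hb : b ≤ N - k) (hk : k ≤ N) :
    (N - (a + b)).choose (k - a) * N.descFactorial (a + b) =
      N.choose k * (k.descFactorial a * (N - k).descFactorial b) := by
  have hN := Nat.factorial_mul_descFactorial (show a + b ≤ N by omega)
  have hka := Nat.factorial_mul_descFactorial ha
  have hkb := Nat.factorial_mul_descFactorial hb
  have hchoose := Nat.choose_mul_factorial_mul_factorial hk
  have hchoose' := Nat.choose_mul_factorial_mul_factorial (show k - a ≤ N - (a + b) by omega)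
  rw [show N - (a + b) - (k - a) = N - k - b by omega] at hchoose'
  have hpos : 0 < (k - a).factorial * (N - k - b).factorial := by positivity
  refine Nat.eq_of_mul_eq_mul_right hpos ?_
  calc (N - (a + b)).choose (k - a) * N.descFactorial (a + b) *
        ((k - a).factorial * (N - k - b).factorial)
      = (N - (a + b)).choose (k - a) * (k - a).factorial * (N - k - b).factorial *
        N.descFactorial (a + b) := by ring
    _ = N.choose k * k.factorial * (N - k).factorial := by rw [hchoose', hN, hchoose]
    _ = _ := by rw [← hka, ← hkb]; ring

theorem pow_le_two_mul_descFactorial {N a : ℕ} (h : 2 * a ^ 2 ≤ N) :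
    (N : ℝ) ^ a ≤ 2 * N.descFactorial a := by
  obtain rfl | ha := Nat.eq_zero_or_pos a
  · simp
  have haN : a ≤ N := by nlinarith
  have hN0 : (0 : ℝ) < N := mod_cast (by omega : 0 < N)
  have haN' : (a : ℝ) / N ≤ 1 := div_le_one_of_le₀ (mod_cast haN) hN0.le
  have hsq : (a : ℝ) * (a / N) ≤ 1 / 2 := by
    rw [mul_div_assoc', div_le_div_iff₀ hN0 two_pos]
    exact_mod_cast (by nlinarith : a * a * 2 ≤ 1 * N)
  have hbernoulli : 1 / 2 ≤ (1 + -(a / N : ℝ)) ^ a :=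
    le_trans (by linarith) (one_add_mul_le_pow (by linarith) a)
  have hdesc : ((N - a : ℕ) : ℝ) ^ a ≤ N.descFactorial a :=
    mod_cast (Nat.pow_le_pow_left (by omega) a).trans (Nat.pow_sub_le_descFactorial N a)
  calc (N : ℝ) ^ a = 2 * (N ^ a * (1 / 2)) := by ring
    _ ≤ 2 * (N ^ a * (1 + -(a / N : ℝ)) ^ a) := by gcongr
    _ = 2 * ((N - a : ℕ) : ℝ) ^ a := by
      rw [← mul_pow, mul_add, mul_one, mul_neg, mul_div_cancel₀ _ hN0.ne', ← sub_eq_add_neg,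
        Nat.cast_sub haN]
    _ ≤ _ := by gcongr

theorem choose_sub_add_le {N k a b : ℕ} (hk : k ≤ N) (ha : a ≤ k) (hab : 2 * (a + b) ^ 2 ≤ N) :
    ((N - (a + b)).choose (k - a) : ℝ) ≤
      2 * N.choose k * (k / N : ℝ) ^ a * (1 - k / N : ℝ) ^ b := by
  have hkN : (k / N : ℝ) ≤ 1 := div_le_one_of_le₀ (mod_cast hk) N.cast_nonneg
  have h1 : 0 ≤ 1 - (k / N : ℝ) := by linarith
  have habN : a + b ≤ N := (Nat.le_self_pow two_ne_zero _).trans (by omega)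
  obtain hb | hb := lt_or_ge (N - k) b
  · rw [Nat.choose_eq_zero_of_lt (by omega), Nat.cast_zero]
    positivity
  obtain rfl | hN := Nat.eq_zero_or_pos N
  · obtain ⟨rfl, rfl⟩ : a = 0 ∧ b = 0 := by omega
    obtain rfl := Nat.le_zero.1 hk
    norm_num
  have hN0 : (0 : ℝ) < N := mod_cast hN
  have hid : ((N - (a + b)).choose (k - a) : ℝ) * N.descFactorial (a + b) =
      N.choose k * (k.descFactorial a * (N - k).descFactorial b) :=
    mod_cast choose_mul_descFactorial_add ha hb hk
  have hka : (k.descFactorial a : ℝ) ≤ k ^ a := mod_cast Nat.descFactorial_le_pow k a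
  have hkb : ((N - k).descFactorial b : ℝ) ≤ (N - k : ℝ) ^ b := by
    rw [← Nat.cast_sub hk]
    exact_mod_cast Nat.descFactorial_le_pow (N - k) b
  have hsub : (1 - k / N : ℝ) = (N - k) / N := by rw [sub_div, div_self hN0.ne']
  refine le_of_mul_le_mul_right ?_ (pow_pos hN0 (a + b))
  calc ((N - (a + b)).choose (k - a) : ℝ) * N ^ (a + b)
      ≤ (N - (a + b)).choose (k - a) * (2 * N.descFactorial (a + b)) := by
        gcongr
        exact pow_le_two_mul_descFactorial hab
    _ = 2 * N.choose k * (k.descFactorial a * (N - k).descFactorial b) := by linarith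
    _ ≤ 2 * N.choose k * (k ^ a * (N - k : ℝ) ^ b) := by gcongr
    _ = _ := by rw [hsub, div_pow, div_pow, pow_add]; field_simp

theorem choose_mul_div_pow_le {N k a : ℕ} (hk : k ≤ N) (ha : 2 * a ^ 2 ≤ k) :
    N.choose k * (k / N : ℝ) ^ a ≤ 2 * (N - a).choose (k - a) := by
  obtain rfl | hk0 := Nat.eq_zero_or_pos k
  · obtain rfl : a = 0 := by nlinarith
    norm_num
  have hak : a ≤ k := by nlinarith
  have hN0 : (0 : ℝ) < N := mod_cast hk0.trans_le hk
  have hid : ((N - a).choose (k - a) : ℝ) * N.descFactorial a =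
      N.choose k * k.descFactorial a := by
    simpa using congrArg (Nat.cast : ℕ → ℝ) (choose_mul_descFactorial_add hak (Nat.zero_le _) hk)
  have hNa : (N.descFactorial a : ℝ) ≤ N ^ a := mod_cast Nat.descFactorial_le_pow N a
  rw [div_pow, mul_div_assoc', div_le_iff₀ (pow_pos hN0 a)]
  calc (N.choose k : ℝ) * k ^ a ≤ N.choose k * (2 * k.descFactorial a) := by
        gcongr
        exact pow_le_two_mul_descFactorial ha
    _ = 2 * (N - a).choose (k - a) * N.descFactorial a := by linarith
    _ ≤ _ := by gcongr

open Finset in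
theorem card_filter_superset_disjoint_le {σ : Type*} [Fintype σ] [DecidableEq σ] {k : ℕ}
    {S B : Finset σ} (hk : k ≤ Fintype.card σ) (hSB : 2 * (#S + #B) ^ 2 ≤ Fintype.card σ) :
    (#{T : Finset σ | #T = k ∧ S ⊆ T ∧ Disjoint T B} : ℝ) ≤
      2 * (Fintype.card σ).choose k * (k / Fintype.card σ : ℝ) ^ #S *
        (1 - k / Fintype.card σ : ℝ) ^ #B := by
  have hkN : (k / Fintype.card σ : ℝ) ≤ 1 :=
    div_le_one_of_le₀ (mod_cast hk) (Nat.cast_nonneg _)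
  obtain hempty | ⟨T, hT⟩ :=
    ({T : Finset σ | #T = k ∧ S ⊆ T ∧ Disjoint T B} : Finset (Finset σ)).eq_empty_or_nonempty
  · have : 0 ≤ 1 - (k / Fintype.card σ : ℝ) := by linarith
    rw [hempty, card_empty, Nat.cast_zero]
    positivity
  obtain ⟨hTk, hST, hTB⟩ := (mem_filter.1 hT).2
  have hcompl : #(S ∪ B)ᶜ = Fintype.card σ - (#S + #B) := by
    rw [card_compl, card_union_of_disjoint (hTB.mono_left hST)]
  refine le_trans ?_ (choose_sub_add_le hk (hTk ▸ card_le_card hST) hSB)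
  rw [← hcompl, ← card_powersetCard, Nat.cast_le]
  refine card_le_card_of_injOn (· \ S) ?_ ?_
  · intro U hU
    obtain ⟨hUk, hSU, hUB⟩ := (mem_filter.1 hU).2
    rw [mem_coe, mem_powersetCard, card_sdiff_of_subset hSU, hUk, subset_compl_iff_disjoint_right,
      disjoint_union_right]
    exact ⟨⟨sdiff_disjoint, hUB.mono_left sdiff_subset⟩, rfl⟩
  · intro U hU U' hU' hUU'
    rw [← sdiff_union_of_subset (mem_filter.1 hU).2.2.1,
      ← sdiff_union_of_subset (mem_filter.1 hU').2.2.1]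
    exact congrArg (· ∪ S) hUU'

end BinomialEstimates

section Concentration

open Finset

variable {n d : ℕ} {A : Type*} [AddCommGroup A] [Fintype A] [DecidableEq A]
  {C : AddSubgroup (Fin n → A)} [Fintype C] {p : ℝ}

theorem IsMDS.fintype_card_eq (hC : IsMDS C d) : Fintype.card C = Fintype.card A ^ d := by
  rw [← Nat.card_eq_fintype_card, hC.card_eq, Nat.card_eq_fintype_card]

theorem IsMDS.sum_pow_sub_card_zeroSet_le (hC : IsMDS C d) (hn : 2 ≤ n)
    (hp : 0 < p) (hψp : (n : ℝ) ^ 2 ≤ Fintype.card A * p) :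
    ∑ h : C, p ^ (2 * n - #(zeroSet h.1)) ≤
      p ^ n + (Fintype.card A : ℝ) ^ d * p ^ (2 * n) * (1 + 2 / n) := by
  have : (0 : ℝ) < Fintype.card A := mod_cast Fintype.card_pos
  have hn' : (2 : ℝ) ≤ n := mod_cast hn
  have hterm (J : Finset (Fin n)) : (Fintype.card A : ℝ) ^ d / (Fintype.card A : ℝ) ^ #J *
      p ^ (2 * n - #J) =
        (Fintype.card A : ℝ) ^ d * p ^ (2 * n) * (1 / (Fintype.card A * p)) ^ #J := by
    have hJ := card_finset_fin_le J
    rw [one_div_pow, mul_pow, ← pow_sub_mul_pow p (by omega : #J ≤ 2 * n)]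
    field_simp
  have hx : n * (1 / (Fintype.card A * p)) ≤ 1 / n := by
    rw [mul_one_div, div_le_div_iff₀ (by positivity) (by positivity)]
    linarith
  have hhalf : (1 : ℝ) / n ≤ 1 / 2 := one_div_le_one_div_of_le two_pos hn'
  have hpow : (1 / (Fintype.card A * p) + 1) ^ n ≤ 1 + 2 / n :=
    (one_add_pow_le_one_add_two_mul (by positivity) (hx.trans hhalf)).trans
      (by rw [← mul_one_div 2]; linarith)
  refine (hC.sum_card_zeroSet_le (φ := fun j => p ^ (2 * n - j)) fun j => by positivity).trans ?_
  simp only [hterm, ← mul_sum, sum_pow_card_finset, Fintype.card_fin]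
  rw [show 2 * n - n = n by omega]
  gcongr

theorem IsMDS.restrictExp_card_graphFamily_sub_sq_le (hC : IsMDS C d)
    (hn : 2 ≤ n) (hp : 0 < p) (hψp : (n : ℝ) ^ 2 ≤ Fintype.card A * p)
    (hZ : n ≤ (Fintype.card A : ℝ) ^ d * p ^ n) :
    restrictExp p (fun V => ((#{S ∈ graphFamily C | S ⊆ V} : ℝ) -
      (Fintype.card A : ℝ) ^ d * p ^ n) ^ 2) ≤
        3 / n * ((Fintype.card A : ℝ) ^ d * p ^ n) ^ 2 := by
  have hn' : (0 : ℝ) < n := mod_cast (by omega : 0 < n)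
  have hsum := hC.sum_pow_sub_card_zeroSet_le hn hp hψp
  have hZZ : (Fintype.card A : ℝ) ^ d * p ^ n ≤
      1 / n * ((Fintype.card A : ℝ) ^ d * p ^ n) ^ 2 := by
    rw [one_div_mul_eq_div, le_div_iff₀ hn', sq]
    gcongr
  rw [restrictExp_sub_const_sq, restrictExp_card_graphFamily, restrictExp_card_graphFamily_sq,
    hC.fintype_card_eq, Nat.cast_pow]
  calc _ ≤ (Fintype.card A : ℝ) ^ d * (p ^ n + (Fintype.card A : ℝ) ^ d * p ^ (2 * n) *
          (1 + 2 / n)) - 2 * ((Fintype.card A : ℝ) ^ d * p ^ n) *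
            ((Fintype.card A : ℝ) ^ d * p ^ n) + ((Fintype.card A : ℝ) ^ d * p ^ n) ^ 2 := by
        gcongr
    _ = (Fintype.card A : ℝ) ^ d * p ^ n + 2 / n * ((Fintype.card A : ℝ) ^ d * p ^ n) ^ 2 := by
        ring
    _ ≤ 1 / n * ((Fintype.card A : ℝ) ^ d * p ^ n) ^ 2 +
          2 / n * ((Fintype.card A : ℝ) ^ d * p ^ n) ^ 2 := by gcongr
    _ = _ := by ring

end Concentration

section RankBound

open Finset

variable {σ : Type*} [Fintype σ] [DecidableEq σ] {𝒜 : Finset (Finset σ)} {n r m : ℕ} {q : ℝ}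

theorem mul_choose_mul_pow_le_sum_sum_sq (h𝒜 : ∀ A ∈ 𝒜, #A = n)
    (hk : m + (n - r) ≤ Fintype.card σ) (hn : 2 * (n - r) ^ 2 ≤ m + (n - r))
    (hq : q = ((m + (n - r) : ℕ) : ℝ) / Fintype.card σ) :
    #𝒜 * n.choose r * ((Fintype.card σ).choose (m + (n - r)) * q ^ (n - r)) ≤
      2 * ∑ R, ∑ T, ((∑ A ∈ 𝒜, shiftMatrix r m A).map (Nat.cast : ℕ → ℝ)) R T ^ 2 := by
  have hsum : ∑ R, ∑ T, (∑ A ∈ 𝒜, shiftMatrix r m A) R T =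
      #𝒜 * (n.choose r * (Fintype.card σ - (n - r)).choose m) := by
    simp only [Matrix.sum_apply]
    rw [sum_congr rfl fun R _ => sum_comm, sum_comm, ← smul_eq_mul, ← sum_const]
    refine sum_congr rfl fun A hA => ?_
    rw [sum_sum_shiftMatrix, h𝒜 A hA]
  have hsq : ((∑ R, ∑ T, (∑ A ∈ 𝒜, shiftMatrix r m A) R T : ℕ) : ℝ) ≤
      ∑ R, ∑ T, ((∑ A ∈ 𝒜, shiftMatrix r m A).map (Nat.cast : ℕ → ℝ)) R T ^ 2 := by
    simp only [Matrix.map_apply]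
    exact_mod_cast sum_le_sum fun R _ => sum_le_sum fun T _ => Nat.le_self_pow two_ne_zero _
  have hchoose := choose_mul_div_pow_le hk hn
  rw [← hq, Nat.add_sub_cancel] at hchoose
  rw [hsum] at hsq
  push_cast at hsq
  calc _ ≤ #𝒜 * n.choose r * (2 * ((Fintype.card σ - (n - r)).choose m : ℝ)) := by gcongr
    _ ≤ _ := by linarith

theorem choose_div_le_rank_sum_shiftMatrix {Z w : ℝ} (h𝒜 : ∀ A ∈ 𝒜, #A = n) (hr : r ≤ n)
    (hk0 : 0 < m + (n - r)) (hk : m + (n - r) ≤ Fintype.card σ)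
    (hn : 2 * (n - r) ^ 2 ≤ m + (n - r))
    (hq : q = ((m + (n - r) : ℕ) : ℝ) / Fintype.card σ) (hZ : 0 < Z) (hw : 0 < w)
    (hcard : Z / 2 ≤ #𝒜)
    (hgram : ((∑ T, ∑ T', ((∑ A ∈ 𝒜, shiftMatrix r m A).transpose *
      ∑ A ∈ 𝒜, shiftMatrix r m A) T T' ^ 2 : ℕ) : ℝ) ≤
        w * (16 * ((Fintype.card σ).choose (m + (n - r)) * Z ^ 2 * (n.choose r : ℝ) ^ 2 *
          q ^ (2 * (n - r))))) :
    ((Fintype.card σ).choose (m + (n - r)) : ℝ) / (256 * w) ≤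
      ((∑ A ∈ 𝒜, shiftMatrix r m A).map (Nat.cast : ℕ → ℝ)).rank := by
  set M := ∑ A ∈ 𝒜, shiftMatrix r m A
  have hcauchy := sq_sum_sq_le_rank_mul_sum_gram_sq (M.map (Nat.cast : ℕ → ℝ))
  have hcast : ∑ T, ∑ T', ((M.map (Nat.cast : ℕ → ℝ)).transpose *
      M.map (Nat.cast : ℕ → ℝ)) T T' ^ 2 = ((∑ T, ∑ T', (M.transpose * M) T T' ^ 2 : ℕ) : ℝ) := by
    simp [Matrix.mul_apply]
  have hsum := mul_choose_mul_pow_le_sum_sum_sq h𝒜 hk hn hq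
  have : 0 < Fintype.card σ := hk0.trans_le hk
  have hq0 : 0 < q := by rw [hq]; positivity
  have hC : (0 : ℝ) < (Fintype.card σ).choose (m + (n - r)) := mod_cast Nat.choose_pos hk
  have hc : (0 : ℝ) < n.choose r := mod_cast Nat.choose_pos hr
  rw [hcast] at hcauchy
  set CN : ℝ := ((Fintype.card σ).choose (m + (n - r)) : ℝ)
  have hD : 0 < CN * Z ^ 2 * (n.choose r : ℝ) ^ 2 * q ^ (2 * (n - r)) := by positivity
  rw [div_le_iff₀ (by positivity)]
  refine le_of_mul_le_mul_right ?_ hD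
  calc CN * (CN * Z ^ 2 * (n.choose r : ℝ) ^ 2 * q ^ (2 * (n - r)))
      = 16 * (Z / 2 * n.choose r * (CN * q ^ (n - r)) / 2) ^ 2 := by ring
    _ ≤ 16 * (∑ R, ∑ T, M.map (Nat.cast : ℕ → ℝ) R T ^ 2) ^ 2 := by
      gcongr
      rw [div_le_iff₀' two_pos]
      exact le_trans (by gcongr) hsum
    _ ≤ 16 * ((M.map (Nat.cast : ℕ → ℝ)).rank * (w * (16 * (CN * Z ^ 2 * (n.choose r : ℝ) ^ 2 *
        q ^ (2 * (n - r)))))) := by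
      gcongr
      exact hcauchy.trans (by gcongr)
    _ = _ := by ring

end RankBound

section CodePolynomials

open Finset

variable {n d r m : ℕ} {A : Type*} [AddCommGroup A] [Fintype A] [DecidableEq A]
  {C : AddSubgroup (Fin n → A)} [Fintype C] {p q : ℝ}

theorem IsMDS.restrictExp_sum_gram_graphFamily_le (hC : IsMDS C d) (hn : 18 ≤ n)
    (hr : r ≤ n) (hp0 : 0 < p) (hp1 : p ≤ 1)
    (hq : q = ((m + (n - r) : ℕ) : ℝ) / Fintype.card (Fin n × A)) (hq0 : 1 / 4 ≤ q)
    (hq1 : q ≤ 1) (hψp : (n : ℝ) ^ 2 ≤ Fintype.card A * p)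
    (hqn : ∀ i ≤ n, (1 - q) ^ i ≤ 2 * (n : ℝ) ^ (2 * r) * q ^ i)
    (h4 : 4 ^ n ≤ (Fintype.card A : ℝ) ^ d * p ^ n)
    (h16 : 16 ^ n ≤ (Fintype.card A : ℝ) ^ (n - d)) :
    restrictExp p (fun V => ((∑ T, ∑ T',
      ((∑ S ∈ graphFamily C with S ⊆ V, shiftMatrix r m S).transpose *
        ∑ S ∈ graphFamily C with S ⊆ V, shiftMatrix r m S) T T' ^ 2 : ℕ) : ℝ)) ≤
      16 * ((Fintype.card (Fin n × A)).choose (m + (n - r)) *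
        ((Fintype.card A : ℝ) ^ d * p ^ n) ^ 2 * (n.choose r : ℝ) ^ 2 * q ^ (2 * (n - r))) := by
  have hq' : 0 ≤ q := by linarith
  have hψ : n ^ 2 ≤ Fintype.card A := by
    exact_mod_cast hψp.trans (mul_le_of_le_one_right (Nat.cast_nonneg _) hp1)
  have hN : 18 * n ^ 2 ≤ Fintype.card (Fin n × A) := by
    rw [Fintype.card_prod, Fintype.card_fin]
    exact Nat.mul_le_mul hn hψ
  have hk : m + (n - r) ≤ Fintype.card (Fin n × A) := by
    have hN0 : (0 : ℝ) < Fintype.card (Fin n × A) := mod_cast lt_of_lt_of_le (by positivity) hN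
    rw [hq, div_le_one hN0] at hq1
    exact_mod_cast hq1
  have hT (S B : Finset (Fin n × A)) (hS : #S ≤ 2 * n) (hB : #B ≤ n) :
      (#{T | #T = m + (n - r) ∧ S ⊆ T ∧ Disjoint T B} : ℝ) ≤
        2 * (Fintype.card (Fin n × A)).choose (m + (n - r)) * q ^ #S * (1 - q) ^ #B := by
    have hSB : 2 * (#S + #B) ^ 2 ≤ Fintype.card (Fin n × A) :=
      calc 2 * (#S + #B) ^ 2 ≤ 2 * (2 * n + n) ^ 2 := by gcongr
        _ = 18 * n ^ 2 := by ring
        _ ≤ _ := hN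
    rw [hq]
    exact card_filter_superset_disjoint_le hk hSB
  refine (restrictExp_sum_gram_graphFamily_le_sum_overlapWeight hp0.le hp1 hq' hq1
    (by positivity) hT).trans ?_
  simp only [← mul_sum]
  calc _ ≤ (Fintype.card C : ℝ) * (2 * (Fintype.card (Fin n × A)).choose (m + (n - r)) *
        (8 * ((Fintype.card A : ℝ) ^ d * overlapWeight n r p q n 0))) := by
        gcongr
        exact hC.sum_sum_overlapWeight_le (by omega) hr hp0 hq0 hq1 hψp hqn h4 h16
    _ = _ := by
        rw [overlapWeight_zero_right, hC.fintype_card_eq, Nat.cast_pow]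
        ring

theorem IsMDS.le_restrictProb_choose_div_le_Phi (F : Type*) [Field F] [CharZero F]
    (hC : IsMDS C d) (hn : 18 ≤ n) (hr : r ≤ n) (hp0 : 0 < p) (hp1 : p ≤ 1)
    (hq : q = ((m + (n - r) : ℕ) : ℝ) / Fintype.card (Fin n × A)) (hq0 : 1 / 4 ≤ q)
    (hq1 : q ≤ 1) (hψp : (n : ℝ) ^ 2 ≤ Fintype.card A * p)
    (hqn : ∀ i ≤ n, (1 - q) ^ i ≤ 2 * (n : ℝ) ^ (2 * r) * q ^ i)
    (h4 : 4 ^ n ≤ (Fintype.card A : ℝ) ^ d * p ^ n)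
    (h16 : 16 ^ n ≤ (Fintype.card A : ℝ) ^ (n - d)) {w : ℝ} (hw : 0 < w) :
    1 - (12 / n + 1 / w) ≤ restrictProb (Fin n × A) p fun V =>
      ((Fintype.card (Fin n × A)).choose (m + (n - r)) : ℝ) / (256 * w) ≤
        Phi F {γ | (∀ v, γ v ≤ 1) ∧ ∑ v, γ v = r} m
          (restrictPoly V (∑ S ∈ graphFamily C, ∏ v ∈ S, X v)) := by
  have hq' : 0 < q := by linarith
  have hn' : (18 : ℝ) ≤ n := mod_cast hn
  have hψ : (n : ℝ) ^ 2 ≤ Fintype.card A :=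
    hψp.trans (mul_le_of_le_one_right (Nat.cast_nonneg _) hp1)
  have hN : (n : ℝ) * n ^ 2 ≤ Fintype.card (Fin n × A) := by
    rw [Fintype.card_prod, Fintype.card_fin, Nat.cast_mul]
    gcongr
  have hN0 : (0 : ℝ) < Fintype.card (Fin n × A) := lt_of_lt_of_le (by positivity) hN
  have hk : m + (n - r) ≤ Fintype.card (Fin n × A) := by
    rw [hq, div_le_one hN0] at hq1
    exact_mod_cast hq1
  have hk2 : 2 * n ^ 2 ≤ m + (n - r) := by
    rw [hq, div_le_div_iff₀ (by norm_num) hN0] at hq0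
    have : 2 * (n : ℝ) ^ 2 ≤ ((m + (n - r) : ℕ) : ℝ) := by nlinarith
    exact_mod_cast this
  have hnr : 2 * (n - r) ^ 2 ≤ m + (n - r) := le_trans (by gcongr; exact n.sub_le r) hk2
  have hk0 : 0 < m + (n - r) := lt_of_lt_of_le (by positivity) hk2
  have hZ : (n : ℝ) ≤ (Fintype.card A : ℝ) ^ d * p ^ n :=
    le_trans (mod_cast (Nat.lt_pow_self (by norm_num : 1 < 4)).le) h4
  have hZ0 : 0 < (Fintype.card A : ℝ) ^ d * p ^ n := by linarith
  have hC0 : (0 : ℝ) < (Fintype.card (Fin n × A)).choose (m + (n - r)) :=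
    mod_cast Nat.choose_pos hk
  have hc0 : (0 : ℝ) < n.choose r := mod_cast Nat.choose_pos hr
  have hvar := hC.restrictExp_card_graphFamily_sub_sq_le (by omega) hp0 hψp hZ
  have hgram := hC.restrictExp_sum_gram_graphFamily_le hn hr hp0 hp1 hq hq0 hq1 hψp hqn h4 h16
  rw [show 12 / (n : ℝ) = 4 * (3 / n) by ring]
  refine le_restrictProb_of_moments hp0.le hp1 hZ0 (by positivity) hw
    (fun V => Nat.cast_nonneg _) hvar hgram fun V hS hG => ?_
  have hrank := choose_div_le_rank_sum_shiftMatrix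
    (fun S hS => card_of_mem_graphFamily (mem_filter.1 hS).1) hr hk0 hk hnr hq hZ0 hw hS hG
  rw [restrictPoly_sum_prod_X]
  exact hrank.trans (mod_cast rank_sum_shiftMatrix_le_Phi F ℝ r m _)

end CodePolynomials

section NisanWigderson

open Finset

theorem sum_graphFamily_range_reedSolomon {R M : Type*} [CommRing R] [IsDomain R]
    [AddCommMonoid M] {n d : ℕ} {x : Fin n → R} (hx : Function.Injective x) (hd : d ≤ n)
    [Fintype (Fin d → R)] [Fintype (reedSolomon x d).range] (φ : Finset (Fin n × R) → M) :
    ∑ S ∈ graphFamily (reedSolomon x d).range, φ S = ∑ c, φ (graph (reedSolomon x d c)) := by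
  rw [sum_graphFamily]
  exact (Fintype.sum_equiv (AddMonoidHom.ofInjective (reedSolomon_injective hx hd)).toEquiv
    _ _ fun _ => rfl).symm

theorem injective_natCast_zmod {n ψ : ℕ} (h : n ≤ ψ) :
    Function.Injective fun i : Fin n => ((i : ℕ) : ZMod ψ) := by
  intro i j hij
  have hmod := (ZMod.natCast_eq_natCast_iff' _ _ _).1 hij
  rw [Nat.mod_eq_of_lt (i.2.trans_le h), Nat.mod_eq_of_lt (j.2.trans_le h)] at hmod
  exact Fin.ext hmod

theorem prod_graph {M A : Type*} [CommMonoid M] {n : ℕ} (f : Fin n → A)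
    (φ : Fin n × A → M) : ∏ v ∈ graph f, φ v = ∏ i, φ (i, f i) :=
  prod_map _ _ _

theorem NWpoly_eq_sum_graphFamily (F : Type*) [Field F] {μ : ℝ} {n ψ : ℕ} [Fact ψ.Prime]
    (hn : n ≤ ψ) (hd : ⌊nwDreal μ n (n * ψ)⌋₊ ≤ n) :
    NWpoly F μ n ψ = ∑ S ∈ graphFamily
      (reedSolomon (fun i : Fin n => ((i : ℕ) : ZMod ψ)) ⌊nwDreal μ n (n * ψ)⌋₊).range,
        ∏ v ∈ S, X v := by
  rw [sum_graphFamily_range_reedSolomon (injective_natCast_zmod hn) hd]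
  exact sum_congr rfl fun c _ => (prod_graph (reedSolomon _ _ c) X).symm

end NisanWigderson

section DegreeParameter

variable {μ : ℝ} {n N ψ : ℕ}

theorem one_sub_mul_two_add_nwGamma (hμ : μ < 1) :
    (1 - (μ + (1 - μ) / 2)) * (2 + nwGamma μ) = 3 := by
  have h : 1 - (μ + (1 - μ) / 2) ≠ 0 := by linarith
  rw [nwGamma, mul_add, mul_div_cancel₀ _ h]
  ring

theorem nwGamma_nonneg (hμ0 : -1 ≤ μ) (hμ1 : μ < 1) : 0 ≤ nwGamma μ :=
  div_nonneg (by linarith) (by linarith)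

theorem nwDreal_mul_log (hμ0 : -1 ≤ μ) (hμ1 : μ < 1) (hn : 1 < n) :
    2 * (nwDreal μ n N * ((1 + nwGamma μ) * Real.log n)) =
      n * (nwGamma μ * Real.log n + (μ + (1 - μ) / 2) * Real.log N) := by
  have : Real.log n ≠ 0 := (Real.log_pos (mod_cast hn)).ne'
  have : 1 + nwGamma μ ≠ 0 := by linarith [nwGamma_nonneg hμ0 hμ1]
  rw [nwDreal]
  field_simp

theorem nwDreal_nonneg (hμ0 : -1 ≤ μ) (hμ1 : μ < 1) : 0 ≤ nwDreal μ n N := by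
  have := nwGamma_nonneg hμ0 hμ1
  have : 0 ≤ μ + (1 - μ) / 2 := by linarith
  rw [nwDreal]
  positivity

theorem mul_le_sub_nwDreal_mul_log (hμ0 : -1 ≤ μ) (hμ1 : μ < 1) (hn : 1 < n)
    (hN : Real.log N ≤ 1 + (2 + nwGamma μ) * Real.log n) :
    n * (3 * Real.log n - 1) ≤
      2 * ((n - nwDreal μ n N) * ((1 + nwGamma μ) * Real.log n)) := by
  have hD := nwDreal_mul_log (N := N) hμ0 hμ1 hn
  have hγ := congrArg (· * Real.log n) (one_sub_mul_two_add_nwGamma hμ1)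
  have hμN : (μ + (1 - μ) / 2) * Real.log N ≤
      (μ + (1 - μ) / 2) * (1 + (2 + nwGamma μ) * Real.log n) :=
    mul_le_mul_of_nonneg_left hN (by linarith)
  calc n * (3 * Real.log n - 1)
      ≤ n * ((2 + nwGamma μ) * Real.log n - (μ + (1 - μ) / 2) * Real.log N) :=
        mul_le_mul_of_nonneg_left (by linarith) (Nat.cast_nonneg n)
    _ = _ := by linear_combination hD

theorem mul_le_nwDreal_mul_log_sub (hμ0 : -1 ≤ μ) (hμ1 : μ < 1) (hn : 1 < n)
    (hN : Real.log N ≤ 1 + (2 + nwGamma μ) * Real.log n) :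
    n * (Real.log n - 1) ≤ 2 * (nwDreal μ n N * ((1 + nwGamma μ) * Real.log n) -
      n * ((μ + (1 - μ) / 2) * Real.log N)) := by
  have hD := nwDreal_mul_log (N := N) hμ0 hμ1 hn
  have hγ := congrArg (· * Real.log n) (one_sub_mul_two_add_nwGamma hμ1)
  have hμN : (μ + (1 - μ) / 2) * Real.log N ≤
      (μ + (1 - μ) / 2) * (1 + (2 + nwGamma μ) * Real.log n) :=
    mul_le_mul_of_nonneg_left hN (by linarith)
  calc n * (Real.log n - 1)
      ≤ n * (nwGamma μ * Real.log n - (μ + (1 - μ) / 2) * Real.log N) :=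
        mul_le_mul_of_nonneg_left (by linarith) (Nat.cast_nonneg n)
    _ = _ := by linear_combination -hD

theorem log_natCast_mul_le (hn : 0 < n) (hψ : 0 < ψ)
    (hhi : (ψ : ℝ) ≤ 2 * (n : ℝ) ^ (1 + nwGamma μ)) :
    Real.log (n * ψ : ℕ) ≤ 1 + (2 + nwGamma μ) * Real.log n := by
  have hn' : (0 : ℝ) < n := mod_cast hn
  have hψ' : (0 : ℝ) < ψ := mod_cast hψ
  have h := Real.log_le_log hψ' hhi
  rw [Real.log_mul two_ne_zero (Real.rpow_pos_of_pos hn' _).ne', Real.log_rpow hn'] at h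
  rw [Nat.cast_mul, Real.log_mul hn'.ne' hψ'.ne']
  linarith [Real.log_two_lt_d9]

theorem mul_log_le_log (hn : 0 < n) (hlo : (n : ℝ) ^ (1 + nwGamma μ) ≤ ψ) :
    (1 + nwGamma μ) * Real.log n ≤ Real.log ψ := by
  have hn' : (0 : ℝ) < n := mod_cast hn
  rw [← Real.log_rpow hn']
  exact Real.log_le_log (Real.rpow_pos_of_pos hn' _) hlo

theorem le_of_rpow_one_add_nwGamma_le (hμ0 : -1 ≤ μ) (hμ1 : μ < 1) (hn : 0 < n)
    (hlo : (n : ℝ) ^ (1 + nwGamma μ) ≤ ψ) : n ≤ ψ := by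
  have h := Real.self_le_rpow_of_one_le (mod_cast hn : (1 : ℝ) ≤ n)
    (by linarith [nwGamma_nonneg hμ0 hμ1] : 1 ≤ 1 + nwGamma μ)
  exact_mod_cast h.trans hlo

theorem sq_le_mul_rpow_neg (hμ1 : μ < 1) (hn : 0 < n) (hψ : 0 < ψ)
    (hlo : (n : ℝ) ^ (1 + nwGamma μ) ≤ ψ) :
    (n : ℝ) ^ 2 ≤ ψ * ((n * ψ : ℕ) : ℝ) ^ (-(μ + (1 - μ) / 2)) := by
  have hn' : (0 : ℝ) < n := mod_cast hn
  have : (0 : ℝ) < ψ := mod_cast hψ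
  have hN : (n : ℝ) ^ (2 + nwGamma μ) ≤ ((n * ψ : ℕ) : ℝ) :=
    calc (n : ℝ) ^ (2 + nwGamma μ) = n * (n : ℝ) ^ (1 + nwGamma μ) := by
          rw [show 2 + nwGamma μ = 1 + (1 + nwGamma μ) by ring, Real.rpow_add hn', Real.rpow_one]
      _ ≤ n * ψ := by gcongr
      _ = _ := (Nat.cast_mul n ψ).symm
  refine le_of_mul_le_mul_left ?_ hn'
  calc (n : ℝ) * n ^ 2 = ((n : ℝ) ^ (2 + nwGamma μ)) ^ (1 - (μ + (1 - μ) / 2)) := by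
        rw [← Real.rpow_mul hn'.le, mul_comm (2 + nwGamma μ), one_sub_mul_two_add_nwGamma hμ1,
          ← pow_succ']
        exact_mod_cast (Real.rpow_natCast (n : ℝ) 3).symm
    _ ≤ ((n * ψ : ℕ) : ℝ) ^ (1 - (μ + (1 - μ) / 2)) := by
        gcongr
        linarith
    _ = n * (ψ * ((n * ψ : ℕ) : ℝ) ^ (-(μ + (1 - μ) / 2))) := by
        rw [sub_eq_add_neg, Real.rpow_add (by positivity), Real.rpow_one, ← mul_assoc,
          Nat.cast_mul]

theorem floor_nwDreal_le (hμ0 : -1 ≤ μ) (hμ1 : μ < 1) (hn : 1 ≤ Real.log n)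
    (hN : Real.log N ≤ 1 + (2 + nwGamma μ) * Real.log n) : ⌊nwDreal μ n N⌋₊ ≤ n := by
  have hn1 : 1 < n := mod_cast (Real.log_pos_iff n.cast_nonneg).1 (by linarith)
  have hgap := mul_le_sub_nwDreal_mul_log hμ0 hμ1 hn1 hN
  have hpos : 0 < (1 + nwGamma μ) * Real.log n :=
    mul_pos (by linarith [nwGamma_nonneg hμ0 hμ1]) (by linarith)
  have hleft : 0 ≤ n * (3 * Real.log n - 1) := mul_nonneg (Nat.cast_nonneg n) (by linarith)
  exact Nat.floor_le_of_le (sub_nonneg.1 (nonneg_of_mul_nonneg_left (by linarith) hpos))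

theorem sixteen_pow_le_pow_sub_floor_nwDreal (hμ0 : -1 ≤ μ) (hμ1 : μ < 1)
    (hn : 8 ≤ Real.log n) (hψ : 0 < ψ) (hlo : (n : ℝ) ^ (1 + nwGamma μ) ≤ ψ)
    (hhi : (ψ : ℝ) ≤ 2 * (n : ℝ) ^ (1 + nwGamma μ)) :
    (16 : ℝ) ^ n ≤ (ψ : ℝ) ^ (n - ⌊nwDreal μ n (n * ψ)⌋₊) := by
  have hn1 : 1 < n := mod_cast (Real.log_pos_iff n.cast_nonneg).1 (by linarith)
  have : (0 : ℝ) < ψ := mod_cast hψ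
  have hN := log_natCast_mul_le (by omega) hψ hhi
  have hd := floor_nwDreal_le hμ0 hμ1 (by linarith) hN
  have hgap := mul_le_sub_nwDreal_mul_log hμ0 hμ1 hn1 hN
  have hfloor := Nat.floor_le (nwDreal_nonneg (n := n) (N := n * ψ) hμ0 hμ1)
  have hd' : ((⌊nwDreal μ n (n * ψ)⌋₊ : ℕ) : ℝ) ≤ n := mod_cast hd
  have hpos : 0 ≤ (1 + nwGamma μ) * Real.log n :=
    mul_nonneg (by linarith [nwGamma_nonneg hμ0 hμ1]) (by linarith)
  rw [← Real.log_le_log_iff (by positivity) (by positivity), Real.log_pow, Real.log_pow,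
    show (16 : ℝ) = 2 ^ 4 by norm_num, Real.log_pow, Nat.cast_sub hd]
  calc n * ((4 : ℕ) * Real.log 2) ≤ n * ((3 * Real.log n - 1) / 2) := by
        gcongr
        push_cast
        linarith [Real.log_two_lt_d9]
    _ ≤ (n - nwDreal μ n (n * ψ)) * ((1 + nwGamma μ) * Real.log n) := by linarith
    _ ≤ (n - ⌊nwDreal μ n (n * ψ)⌋₊) * Real.log ψ :=
        mul_le_mul (by linarith) (mul_log_le_log (by omega) hlo) hpos (by linarith)

theorem four_pow_le_pow_floor_nwDreal_mul (hμ0 : -1 ≤ μ) (hμ1 : μ < 1)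
    (hn : 8 ≤ Real.log n) (hγ : 4 * (2 + nwGamma μ) ≤ n) (hψ : 0 < ψ)
    (hlo : (n : ℝ) ^ (1 + nwGamma μ) ≤ ψ) (hhi : (ψ : ℝ) ≤ 2 * (n : ℝ) ^ (1 + nwGamma μ)) :
    (4 : ℝ) ^ n ≤ (ψ : ℝ) ^ ⌊nwDreal μ n (n * ψ)⌋₊ *
      (((n * ψ : ℕ) : ℝ) ^ (-(μ + (1 - μ) / 2))) ^ n := by
  have hn1 : 1 < n := mod_cast (Real.log_pos_iff n.cast_nonneg).1 (by linarith)
  have hN0 : (0 : ℝ) < (n * ψ : ℕ) := mod_cast Nat.mul_pos (by omega) hψ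
  have hψ' : (0 : ℝ) < ψ := mod_cast hψ
  have hN := log_natCast_mul_le (by omega) hψ hhi
  have hP := mul_log_le_log (by omega) hlo
  have hgap := mul_le_nwDreal_mul_log_sub hμ0 hμ1 hn1 hN
  have hD := nwDreal_nonneg (n := n) (N := n * ψ) hμ0 hμ1
  have hpos : 0 ≤ (1 + nwGamma μ) * Real.log n :=
    mul_nonneg (by linarith [nwGamma_nonneg hμ0 hμ1]) (by linarith)
  have hmulN : Real.log (n * ψ : ℕ) = Real.log n + Real.log ψ := by
    rw [Nat.cast_mul, Real.log_mul (by positivity) hψ'.ne']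
  have hfloor : (nwDreal μ n (n * ψ) - 1) * Real.log ψ ≤
      ⌊nwDreal μ n (n * ψ)⌋₊ * Real.log ψ :=
    mul_le_mul_of_nonneg_right (Nat.sub_one_lt_floor _).le (hpos.trans hP)
  have hDP := mul_le_mul_of_nonneg_left hP hD
  have hnl : 4 * (2 + nwGamma μ) * (Real.log n / 4) ≤ n * (Real.log n / 4) :=
    mul_le_mul_of_nonneg_right hγ (by linarith)
  rw [← Real.log_le_log_iff (by positivity) (by positivity), Real.log_mul (by positivity)
    (by positivity), Real.log_pow, Real.log_pow, Real.log_pow, Real.log_rpow hN0,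
    show (4 : ℝ) = 2 ^ 2 by norm_num, Real.log_pow]
  have hlog : n * ((2 : ℕ) * Real.log 2) ≤ n * ((Real.log n - 1) / 2 - Real.log n / 4) := by
    gcongr
    push_cast
    linarith [Real.log_two_lt_d9]
  linarith

end DegreeParameter

section ShiftDensity

variable {n r i N m t : ℕ} {q x ε : ℝ}

theorem one_add_div_one_sub_le_exp (h0 : 0 ≤ x) (h1 : x ≤ 1 / 2) :
    (1 + x) / (1 - x) ≤ Real.exp (2 * x + 2 * x ^ 3) := by
  have h := Real.quadratic_le_exp_of_nonneg (show 0 ≤ 2 * x + 2 * x ^ 3 by positivity)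
  refine le_trans ?_ h
  rw [div_le_iff₀ (by linarith)]
  have h2 : 0 ≤ x ^ 4 * (1 - 2 * x) := mul_nonneg (pow_nonneg h0 4) (by linarith)
  have h3 : 0 ≤ x ^ 6 * (1 - x) := mul_nonneg (by positivity) (by linarith)
  linarith

theorem one_sub_div_le_one_add_div_one_sub (h1 : x < 1) (hq : (1 - x) / 2 ≤ q) :
    (1 - q) / q ≤ (1 + x) / (1 - x) := by
  rw [div_le_div_iff₀ (by linarith) (by linarith)]
  linarith

theorem one_sub_pow_le_of_half_le (hn : 0 < n) (hx0 : 0 ≤ x) (hx1 : x ≤ 1 / 2)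
    (hx : x * n = r * Real.log n) (hx3 : x ^ 3 * n ≤ 1 / 3) (hq : (1 - x) / 2 ≤ q) (hq1 : q ≤ 1)
    (hi : i ≤ n) : (1 - q) ^ i ≤ 2 * (n : ℝ) ^ (2 * r) * q ^ i := by
  have hq0 : 0 < q := by linarith
  rw [← div_le_iff₀ (pow_pos hq0 i), ← div_pow]
  calc ((1 - q) / q) ^ i ≤ ((1 + x) / (1 - x)) ^ i :=
        pow_le_pow_left₀ (div_nonneg (by linarith) hq0.le)
          (one_sub_div_le_one_add_div_one_sub (by linarith) hq) i
    _ ≤ ((1 + x) / (1 - x)) ^ n :=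
        pow_le_pow_right₀ ((one_le_div (by linarith)).mpr (by linarith)) hi
    _ ≤ Real.exp (2 * x + 2 * x ^ 3) ^ n := pow_le_pow_left₀
        (div_nonneg (by linarith) (by linarith)) (one_add_div_one_sub_le_exp hx0 hx1) n
    _ = Real.exp (2 * (x ^ 3 * n)) * Real.exp ((2 * r : ℕ) * Real.log n) := by
        rw [← Real.exp_nat_mul, ← Real.exp_add]
        congr 1
        push_cast
        linear_combination 2 * hx
    _ = Real.exp (2 * (x ^ 3 * n)) * (n : ℝ) ^ (2 * r) := by
        rw [Real.exp_nat_mul, Real.exp_log (mod_cast hn)]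
    _ ≤ 2 * (n : ℝ) ^ (2 * r) := by
        gcongr
        rw [← Real.le_log_iff_exp_le two_pos]
        linarith [Real.log_two_gt_d9]

theorem half_le_floor_add_div (hN : 0 < N) (ht : 1 ≤ t) :
    (1 - x) / 2 ≤ ((⌊(N : ℝ) / 2 * (1 - x)⌋₊ + t : ℕ) : ℝ) / N := by
  rw [le_div_iff₀ (mod_cast hN)]
  have : (1 : ℝ) ≤ t := mod_cast ht
  push_cast
  linarith [Nat.lt_floor_add_one ((N : ℝ) / 2 * (1 - x))]

theorem floor_add_div_le_one (hx : 0 ≤ x) (hx1 : x ≤ 1) (ht : 2 * t ≤ N) :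
    ((⌊(N : ℝ) / 2 * (1 - x)⌋₊ + t : ℕ) : ℝ) / N ≤ 1 := by
  refine div_le_one_of_le₀ ?_ (Nat.cast_nonneg N)
  have ht' : (2 : ℝ) * t ≤ N := mod_cast ht
  have hxN : 0 ≤ N * x := by positivity
  have hfloor : (⌊(N : ℝ) / 2 * (1 - x)⌋₊ : ℝ) ≤ N / 2 * (1 - x) :=
    Nat.floor_le (mul_nonneg (by positivity) (by linarith))
  push_cast
  linarith

theorem eventually_mul_log_pow_three_le_sqrt (c : ℝ) :
    ∀ᶠ n : ℕ in Filter.atTop, c * Real.log n ^ 3 ≤ Real.sqrt n := by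
  have h := (((isLittleO_log_rpow_rpow_atTop (s := 1 / 2) 3 (by norm_num)).const_mul_left c).bound
    one_pos).natCast_atTop
  filter_upwards [h] with n hn
  rw [← Real.sqrt_eq_rpow, Real.norm_of_nonneg (Real.sqrt_nonneg _), one_mul] at hn
  exact_mod_cast (le_abs_self _).trans hn

theorem div_pow_three_mul_le (hr : r ≤ ε * √n) (hlog : 3 * ε ^ 3 * Real.log n ^ 3 ≤ √n)
    (hn : 0 < n) : (r * Real.log n / n) ^ 3 * n ≤ 1 / 3 := by
  have : 0 < √(n : ℝ) := Real.sqrt_pos.2 (mod_cast hn)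
  have hsq : √(n : ℝ) ^ 2 = n := Real.sq_sqrt (Nat.cast_nonneg n)
  have : 0 ≤ Real.log n := Real.log_natCast_nonneg n
  rw [div_pow, mul_pow, div_mul_eq_mul_div, div_le_div_iff₀ (by positivity) (by norm_num)]
  calc (r : ℝ) ^ 3 * Real.log n ^ 3 * n * 3
      ≤ (ε * √n) ^ 3 * Real.log n ^ 3 * n * 3 := by gcongr
    _ = 3 * ε ^ 3 * Real.log n ^ 3 * √n ^ 3 * n := by ring
    _ ≤ √n * √n ^ 3 * n := by gcongr
    _ = 1 * (n : ℝ) ^ 3 := by linear_combination (n : ℝ) * (√n ^ 2 + n) * hsq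

theorem shift_bounds (hr : r ≤ ε * √n) (hcube : 3 * ε ^ 3 * Real.log n ^ 3 ≤ √n)
    (hlog : 1 ≤ Real.log n) (hn : 3 ≤ n) :
    0 ≤ r * Real.log n / n ∧ r * Real.log n / n ≤ 1 / 2 ∧
      (r * Real.log n / n) ^ 3 * n ≤ 1 / 3 ∧ r < n := by
  have hx3 := div_pow_three_mul_le hr hcube (by omega)
  have hn' : (3 : ℝ) ≤ n := mod_cast hn
  have hx0 : 0 ≤ r * Real.log n / n := by positivity
  have hx1 : r * Real.log n / n ≤ 1 / 2 := by
    have : (r * Real.log n / n) ^ 3 * 3 ≤ 1 / 3 := le_trans (by gcongr) hx3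
    refine le_of_pow_le_pow_left₀ three_ne_zero (by norm_num) ?_
    linarith
  refine ⟨hx0, hx1, hx3, ?_⟩
  rw [div_le_iff₀ (by linarith)] at hx1
  have hrlog := le_mul_of_one_le_right (Nat.cast_nonneg (α := ℝ) r) hlog
  exact_mod_cast (by linarith : (r : ℝ) < n)

end ShiftDensity

theorem one_sub_le_restrictProb_choose_div_le_Phi_NWpoly (F : Type*) [Field F] [CharZero F]
    {μ ε : ℝ} {n ψ r : ℕ} [NeZero ψ] (hμ0 : -1 ≤ μ) (hμ1 : μ < 1)
    (hcube : 3 * ε ^ 3 * Real.log n ^ 3 ≤ √n) (hlog : 8 ≤ Real.log n)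
    (hγ : 4 * (2 + nwGamma μ) ≤ n) (hn : 18 ≤ n) (hψ : ψ.Prime)
    (hlo : (n : ℝ) ^ (1 + nwGamma μ) ≤ ψ) (hhi : (ψ : ℝ) ≤ 2 * (n : ℝ) ^ (1 + nwGamma μ))
    (hr : r ≤ ε * √n) :
    let N : ℕ := n * ψ
    let m : ℕ := ⌊(N : ℝ) / 2 * (1 - (r : ℝ) * Real.log n / n)⌋₊
    let p : ℝ := (N : ℝ) ^ (-(μ + (1 - μ) / 2))
    1 - 268 / n ≤ restrictProb (Fin n × ZMod ψ) p (fun V =>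
      (N.choose (m + n - r) : ℝ) / n ≤
        (Phi F {γ : (Fin n × ZMod ψ) →₀ ℕ | (∀ v, γ v ≤ 1) ∧ (∑ v, γ v) = r} m
          (restrictPoly V (NWpoly F μ n ψ)) : ℝ)) := by
  intro N m p
  have : Fact ψ.Prime := ⟨hψ⟩
  have hnψ : n ≤ ψ := le_of_rpow_one_add_nwGamma_le hμ0 hμ1 (by omega) hlo
  have hcard : Fintype.card (Fin n × ZMod ψ) = N := by simp [N, ZMod.card]
  have hN : 0 < N := Nat.mul_pos (by omega) hψ.pos
  have hnN : 2 * (n - r) ≤ N := by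
    have : n * 2 ≤ N := Nat.mul_le_mul_left n hψ.two_le
    omega
  have hd : ⌊nwDreal μ n N⌋₊ ≤ n := floor_nwDreal_le hμ0 hμ1 (by linarith)
    (log_natCast_mul_le (by omega) hψ.pos hhi)
  obtain ⟨hx0, hx1, hx3, hrn⟩ := shift_bounds hr hcube (by linarith) (by omega)
  have hq : (1 - r * Real.log n / n) / 2 ≤ ((m + (n - r) : ℕ) : ℝ) / N :=
    half_le_floor_add_div hN (by omega)
  have hq1 : ((m + (n - r) : ℕ) : ℝ) / N ≤ 1 := floor_add_div_le_one hx0 (by linarith) hnN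
  have hmain := (isMDS_range_reedSolomon (injective_natCast_zmod hnψ) hd
    ).le_restrictProb_choose_div_le_Phi F (r := r) (m := m) (p := p) hn hrn.le
    (Real.rpow_pos_of_pos (mod_cast hN) _)
    (Real.rpow_le_one_of_one_le_of_nonpos (mod_cast hN) (by linarith)) rfl
    (by rw [hcard]; linarith) (by rwa [hcard])
    (by rw [ZMod.card]; exact sq_le_mul_rpow_neg hμ1 (by omega) hψ.pos hlo)
    (fun i hi => by
      rw [hcard]
      exact one_sub_pow_le_of_half_le (by omega) hx0 hx1 (div_mul_cancel₀ _ (by positivity)) hx3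
        hq hq1 hi)
    (by rw [ZMod.card]; exact four_pow_le_pow_floor_nwDreal_mul hμ0 hμ1 hlog hγ hψ.pos hlo hhi)
    (by rw [ZMod.card]; exact sixteen_pow_le_pow_sub_floor_nwDreal hμ0 hμ1 hlog hψ.pos hlo hhi)
    (w := n / 256) (by positivity)
  rw [hcard, ← NWpoly_eq_sum_graphFamily F hnψ hd, mul_div_cancel₀ _ (by norm_num)] at hmain
  rw [Nat.add_sub_assoc hrn.le]
  convert hmain using 2
  ring

theorem eventually_div_le_rpow_neg_half (c : ℝ) :
    ∀ᶠ n : ℕ in Filter.atTop, c / n ≤ (n : ℝ) ^ (-(1 / 2) : ℝ) := by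
  filter_upwards [((tendsto_rpow_atTop (show (0 : ℝ) < 1 / 2 by norm_num)).comp
    tendsto_natCast_atTop_atTop).eventually_ge_atTop c, Filter.eventually_gt_atTop 0] with n hc hn
  have hn' : (0 : ℝ) < n := mod_cast hn
  rw [div_le_iff₀ hn', ← Real.rpow_add_one hn'.ne', show -(1 / 2 : ℝ) + 1 = 1 / 2 by norm_num]
  exact hc

theorem stmt12_general (F : Type*) [Field F] [CharZero F] {μ : ℝ} (hμ0 : -1 ≤ μ) (hμ1 : μ < 1)
    (ε : ℝ) : ∀ᶠ n : ℕ in Filter.atTop, ∀ (ψ : ℕ) [NeZero ψ], ψ.Prime →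
      (n : ℝ) ^ (1 + nwGamma μ) ≤ (ψ : ℝ) →
      (ψ : ℝ) ≤ 2 * (n : ℝ) ^ (1 + nwGamma μ) →
      ∀ r : ℕ, (r : ℝ) ≤ ε * Real.sqrt n →
      let N : ℕ := n * ψ
      let m : ℕ := ⌊(N : ℝ) / 2 * (1 - (r : ℝ) * Real.log n / n)⌋₊
      let p : ℝ := (N : ℝ) ^ (-(μ + (1 - μ) / 2))
      1 - (n : ℝ) ^ (-(1 / 2) : ℝ) ≤
        restrictProb (Fin n × ZMod ψ) p (fun V =>
          (N.choose (m + n - r) : ℝ) / n ≤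
            (Phi F {γ : (Fin n × ZMod ψ) →₀ ℕ | (∀ v, γ v ≤ 1) ∧ (∑ v, γ v) = r} m
              (restrictPoly V (NWpoly F μ n ψ)) : ℝ)) := by
  have hcast := tendsto_natCast_atTop_atTop (R := ℝ)
  filter_upwards [eventually_mul_log_pow_three_le_sqrt (3 * ε ^ 3),
    hcast.eventually (Real.tendsto_log_atTop.eventually_ge_atTop 8),
    hcast.eventually_ge_atTop (4 * (2 + nwGamma μ)), Filter.eventually_ge_atTop 18,
    eventually_div_le_rpow_neg_half 268]
    with n hcube hlog hγ hn hsmall ψ _ hψ hlo hhi r hr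
  exact (sub_le_sub_left hsmall 1).trans (one_sub_le_restrictProb_choose_div_le_Phi_NWpoly F
    hμ0 hμ1 hcube hlog hγ hn hψ hlo hhi hr)

/-- Kayal–Saha. For `0 ≤ μ < 1`, `δ = (1-μ)/2`, with `r = ⌊ε₁√n⌋`,
`s = ⌊ε₂√n⌋` for sufficiently small positive constants `ε₁, ε₂` with `ε₁·ε₂ ≤ 0.001`,
`m = ⌊(N/2)(1 - r·ln n/n)⌋`, `p = N^{-(μ+δ)}` and `M` the set of all multilinear monomials
of degree `r`, there are constants `c₁, c₂ > 0` such that for all sufficiently large `n`,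
with probability at least `1 - n^{-c₂}` over `V ← D_p`,
`Φ_{M,m}(NW_{n,μ}|_V) ≥ n^{-c₁} · min((p^r/4^r)·binom(N,r)·binom(N,m), binom(N, m+n-r))`. -/
theorem stmt12 (F : Type*) [Field F] [CharZero F] (μ : ℝ) (hμ0 : 0 ≤ μ) (hμ1 : μ < 1) :
    ∃ ε₀ : ℝ, 0 < ε₀ ∧
    ∀ ε₁ ε₂ : ℝ, 0 < ε₁ → ε₁ ≤ ε₀ → 0 < ε₂ → ε₂ ≤ ε₀ → ε₁ * ε₂ ≤ 0.001 →
    ∃ c₁ c₂ : ℝ, 0 < c₁ ∧ 0 < c₂ ∧ ∃ n₀ : ℕ, ∀ n : ℕ, n₀ ≤ n →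
    ∀ (ψ : ℕ) [NeZero ψ], ψ.Prime →
      (n : ℝ) ^ (1 + nwGamma μ) ≤ (ψ : ℝ) →
      (ψ : ℝ) ≤ 2 * (n : ℝ) ^ (1 + nwGamma μ) →
      (∀ ψ' : ℕ, ψ'.Prime → (n : ℝ) ^ (1 + nwGamma μ) ≤ (ψ' : ℝ) →
        (ψ' : ℝ) ≤ 2 * (n : ℝ) ^ (1 + nwGamma μ) → ψ ≤ ψ') →
      let N : ℕ := n * ψ
      let r : ℕ := ⌊ε₁ * Real.sqrt n⌋₊
      let m : ℕ := ⌊(N : ℝ) / 2 * (1 - (r : ℝ) * Real.log n / n)⌋₊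
      let p : ℝ := (N : ℝ) ^ (-(μ + (1 - μ) / 2))
      1 - (n : ℝ) ^ (-c₂) ≤
        restrictProb (Fin n × ZMod ψ) p (fun V =>
          (n : ℝ) ^ (-c₁) *
              min (p ^ r / 4 ^ r * (N.choose r : ℝ) * (N.choose m : ℝ))
                (N.choose (m + n - r) : ℝ) ≤
            (Phi F {γ : (Fin n × ZMod ψ) →₀ ℕ | (∀ v, γ v ≤ 1) ∧ (∑ v, γ v) = r} m
              (restrictPoly V (NWpoly F μ n ψ)) : ℝ)) := by
  refine ⟨1, one_pos, fun ε₁ ε₂ hε₁ _ _ _ _ => ⟨1, 1 / 2, one_pos, by norm_num, ?_⟩⟩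
  obtain ⟨n₀, hn₀⟩ := Filter.eventually_atTop.1 <|
    (stmt12_general F (by linarith) hμ1 ε₁).and (Filter.eventually_gt_atTop 0)
  refine ⟨n₀, fun n hn ψ _ hψ hlo hhi _ => ?_⟩
  intro N r m p
  have hN : 0 < N := Nat.mul_pos (hn₀ n hn).2 hψ.pos
  refine ((hn₀ n hn).1 ψ hψ hlo hhi r (Nat.floor_le (by positivity))).trans
    (restrictProb_mono (Real.rpow_nonneg (Nat.cast_nonneg N) _)
      (Real.rpow_le_one_of_one_le_of_nonpos (mod_cast hN) (by linarith)) fun V => le_trans ?_)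
  rw [Real.rpow_neg_one, inv_mul_eq_div]
  gcongr
  exact min_le_right _ _
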